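/- arXiv:2204.10124 — 3 statements merged into one kernel-verified Lean document; each statement's English description precedes it below -/
import Mathlib

section
/- Let $p$ be a prime and $G$ a finite $p$-solvable group. If $P$ is a Sylow $p$-subgroup of $G$ and $U \leq G$ is a subgroup such that $P \cap U$ is a Sylow $p$-subgroup of $U$, then the number of Sylow $p$-subgroups of $U$ divides the number of Sylow $p$-subgroups of $G$. -/
/-!
Write `ν_p(G)` for the number of Sylow `p`-subgroups of `G`. The proof is by induction on `|G|`, for
an arbitrary subgroup `U`. A nontrivial `p`-solvable group has a nontrivial normal subgroup `N` that
is a `p`-group or a `p'`-group (`IsPSolvable.exists_normal`). By a Frattini argument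
`ν_p(G) = ν_p(G/N) · |N : N_N(P)|` for `P` Sylow in `G` (`card_sylow_eq_mul`), and likewise
`ν_p(U) = ν_p(UN/N) · |N ∩ U : N_{N ∩ U}(S)|` for `S` Sylow in `U`; choose `P` containing `S`. The
first factors are compared by induction. If `N` is a `p`-group, both second factors are `1`.

If `N` is a `p'`-group, then the normalizers in the second factors are centralizers, and the claim
follows from a fact on coprime action (`relIndex_fixed_dvd`): if a `p`-group `A` acts on a
`p'`-group `N` and `M ≤ N` is `A`-invariant, then `|M : C_M(A)|` divides `|N : C_N(A)|`. To see this,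
fix a prime `q`. An invariant Sylow `q`-subgroup `R` of `M` lies in an invariant Sylow `q`-subgroup `Q`
of `N` (`exists_invariant_sylow_ge`), and `C_R(A)`, `C_Q(A)` are Sylow in `C_M(A)`, `C_N(A)`
(`card_sylow_inf_fixed`). So the `q`-parts of the two indices are `|R : C_R(A)| ≤ |Q : C_Q(A)|`. The
`A`-fixed objects needed here exist because a `p`-group acting on a set of size prime to `p` has a
fixed point.
-/

/-- A finite group `G` is `p`-solvable if it has a subnormal series in which each
factor is either a `p`-group or a `p'`-group (equivalently, every composition factor
of `G` is a `p`-group or a `p'`-group). -/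
def IsPSolvable (p : ℕ) (G : Type*) [Group G] : Prop :=
  ∃ (n : ℕ) (H : Fin (n + 1) → Subgroup G),
    H 0 = ⊥ ∧ H (Fin.last n) = ⊤ ∧
    ∀ i : Fin n,
      H i.castSucc ≤ H i.succ ∧
      ((H i.castSucc).subgroupOf (H i.succ)).Normal ∧
      ((∃ k : ℕ, Nat.card (↥(H i.succ) ⧸ (H i.castSucc).subgroupOf (H i.succ)) = p ^ k) ∨
        ¬ p ∣ Nat.card (↥(H i.succ) ⧸ (H i.castSucc).subgroupOf (H i.succ)))

/-! ### Coprime action of a `p`-group -/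

section coprime
open scoped Pointwise
variable {p : ℕ} [Fact p.Prime] {A G : Type*} [Group A] [Group G]
  [MulDistribMulAction A G]

/-- A `p`-group leaving invariant a set of size prime to `p` fixes one of its elements. -/
lemma exists_fixed_of_set {α : Type*} [Finite α] [MulAction A α] (hA : IsPGroup p A) (s : Set α)
    (hs : ∀ a : A, ∀ x ∈ s, a • x ∈ s) (hp : ¬ p ∣ Nat.card s) :
    ∃ x ∈ s, ∀ a : A, a • x = x := by
  let S : SubMulAction A α := ⟨s, fun a {x} hx => hs a x hx⟩
  obtain ⟨x, hx⟩ := hA.nonempty_fixed_point_of_prime_not_dvd_card (α := S) hp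
  exact ⟨x.1, x.2, fun a => congrArg Subtype.val (hx a)⟩

/-- The number of Sylow `q`-subgroups of `W` divides `|W|`, hence is prime to `p`, so the `p`-group `A`
fixes one of them. -/
lemma exists_invariant_sylow [Finite G] (hA : IsPGroup p A) (q : ℕ) [Fact q.Prime] (W : Subgroup G)
    (hW : ∀ a : A, a • W = W) (hp : ¬ p ∣ Nat.card W) :
    ∃ Q : Sylow q W, ∀ a : A, a • (Q : Subgroup W).map W.subtype = (Q : Subgroup W).map W.subtype := by
  have hmem : ∀ (a : A) (w : W), a • (w : G) ∈ W := fun a w => by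
    have := Subgroup.smul_mem_pointwise_smul (w : G) a W w.2
    rwa [hW a] at this
  let _ : MulDistribMulAction A W :=
    { smul := fun a w => ⟨a • (w : G), hmem a w⟩
      one_smul := fun w => Subtype.ext (one_smul A (w : G))
      mul_smul := fun a b w => Subtype.ext (mul_smul a b (w : G))
      smul_mul := fun a v w => Subtype.ext (smul_mul' a (v : G) (w : G))
      smul_one := fun a => Subtype.ext (smul_one a) }
  have hcard : ¬ p ∣ Nat.card (Sylow q W) := fun h => hp <| by
    rw [(default : Sylow q W).card_eq_index_normalizer] at h
    exact h.trans (Subgroup.index_dvd_card _)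
  obtain ⟨Q, hQ⟩ := hA.nonempty_fixed_point_of_prime_not_dvd_card (α := Sylow q W) hcard
  have key : ∀ a : A, ∀ x ∈ (Q : Subgroup W).map W.subtype,
      a • x ∈ (Q : Subgroup W).map W.subtype := by
    rintro a _ ⟨w, hw, rfl⟩
    refine ⟨a • w, ?_, rfl⟩
    have h1 : a • (Q : Subgroup W) = Q := congrArg Sylow.toSubgroup (hQ a)
    have h2 := Subgroup.smul_mem_pointwise_smul w a (Q : Subgroup W) hw
    rwa [h1] at h2
  refine ⟨Q, fun a => le_antisymm ?_ ?_⟩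
  · rintro _ ⟨x, hx, rfl⟩
    exact key a x hx
  · intro x hx
    rw [Subgroup.mem_pointwise_smul_iff_inv_smul_mem]
    exact key a⁻¹ x hx

lemma smul_normalizer_eq (R : Subgroup G) (a : A) (hR : a • R = R) :
    a • Subgroup.normalizer (R : Set G) = Subgroup.normalizer (R : Set G) := by
  have h : ∀ x : G, a⁻¹ • x ∈ R ↔ x ∈ R := fun x => by
    rw [← Subgroup.mem_pointwise_smul_iff_inv_smul_mem, hR]
  ext x
  rw [Subgroup.mem_pointwise_smul_iff_inv_smul_mem, Subgroup.mem_normalizer_iff,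
    Subgroup.mem_normalizer_iff]
  constructor
  · intro hx y
    have := hx (a⁻¹ • y)
    rw [← smul_inv', ← smul_mul', ← smul_mul', h, h] at this
    exact this
  · intro hx y
    have := hx (a • y)
    rw [← h, ← h (x * _ * _), smul_mul', smul_mul', smul_inv', inv_smul_smul] at this
    exact this

/-- Every `A`-invariant `q`-subgroup `R` of the `A`-invariant `p'`-group `N` lies in an `A`-invariant
Sylow `q`-subgroup of `N`. If `R` is not itself Sylow, then an invariant Sylow `q`-subgroup of
`N_N(R)` strictly contains `R`, and one iterates. -/
lemma exists_invariant_sylow_ge [Finite G] (hA : IsPGroup p A) (q : ℕ) [Fact q.Prime] (N : Subgroup G)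
    (hN : ∀ a : A, a • N = N) (hp : ¬ p ∣ Nat.card N) (R : Subgroup G) (hRN : R ≤ N)
    (hR : ∀ a : A, a • R = R) (hRq : IsPGroup q R) :
    ∃ Q : Subgroup G, R ≤ Q ∧ Q ≤ N ∧ (∀ a : A, a • Q = Q) ∧
      Nat.card Q = q ^ (Nat.card N).factorization q := by
  induction hd : Nat.card N - Nat.card R using Nat.strong_induction_on generalizing R with
  | _ d ih =>
  have hq : q.Prime := Fact.out
  obtain ⟨k, hk⟩ := IsPGroup.iff_card.mp hRq
  have hRN' : Nat.card R ∣ Nat.card N := Subgroup.card_dvd_of_le hRN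
  have hkv : k ≤ (Nat.card N).factorization q :=
    (hq.pow_dvd_iff_le_factorization Nat.card_pos.ne').mp (hk ▸ hRN')
  rcases hkv.eq_or_lt with hkv | hkv
  · exact ⟨R, le_rfl, hRN, hR, hkv ▸ hk⟩
  set W : Subgroup G := N ⊓ Subgroup.normalizer (R : Set G) with hWdef
  have hW : ∀ a : A, a • W = W := fun a => by
    rw [hWdef, Subgroup.smul_inf, hN, smul_normalizer_eq R a (hR a)]
  have hRW : R ≤ W := le_inf hRN Subgroup.le_normalizer
  have hWN : W ≤ N := inf_le_left
  obtain ⟨Q, hQ⟩ := exists_invariant_sylow hA q W hW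
    (fun h => hp (h.trans (Subgroup.card_dvd_of_le hWN)))
  have hnorm : (R.subgroupOf W).Normal :=
    (Subgroup.normal_subgroupOf_iff_le_normalizer hRW).mpr inf_le_right
  have hRQ : R.subgroupOf W ≤ Q :=
    IsPGroup.le_sylow_of_normal (N := R.subgroupOf W) hRq.comap_subtype Q
  have hRQ' : R ≤ (Q : Subgroup W).map W.subtype := by
    have := Subgroup.map_mono (f := W.subtype) hRQ
    rwa [Subgroup.map_subgroupOf_eq_of_le hRW] at this
  have hQW : (Q : Subgroup W).map W.subtype ≤ W := Subgroup.map_subtype_le _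
  have hcardW : q ^ (k + 1) ∣ Nat.card W := by
    have h1 : q ^ (k + 1) ∣ Nat.card N :=
      (hq.pow_dvd_iff_le_factorization Nat.card_pos.ne').mpr hkv
    have h2 : Nat.card (R.subgroupOf N) = q ^ k := by
      rw [Nat.card_congr (Subgroup.subgroupOfEquivOfLe hRN).toEquiv, hk]
    have h3 := Sylow.prime_pow_dvd_card_normalizer h1 h2
    rw [← Subgroup.subgroupOf_normalizer_eq hRN] at h3
    have h4 : Nat.card ((Subgroup.normalizer (R : Set G)).subgroupOf N) = Nat.card W := by
      rw [← Subgroup.inf_subgroupOf_left,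
        Nat.card_congr (Subgroup.subgroupOfEquivOfLe inf_le_left).toEquiv]
    rwa [h4] at h3
  have hcardQ : Nat.card ((Q : Subgroup W).map W.subtype) = q ^ (Nat.card W).factorization q := by
    rw [Subgroup.card_subtype, Q.card_eq_multiplicity]
  have hlt : Nat.card R < Nat.card ((Q : Subgroup W).map W.subtype) := by
    rw [hk, hcardQ]
    exact Nat.pow_lt_pow_right hq.one_lt
      ((hq.pow_dvd_iff_le_factorization Nat.card_pos.ne').mp hcardW)
  have hle : Nat.card ((Q : Subgroup W).map W.subtype) ≤ Nat.card N :=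
    Subgroup.card_le_of_le (hQW.trans hWN)
  obtain ⟨Q', h1, h2⟩ := ih _ (by omega) _ (hQW.trans hWN) hQ (IsPGroup.of_card hcardQ) rfl
  exact ⟨Q', hRQ'.trans h1, h2⟩

/-- Two `A`-invariant Sylow `q`-subgroups of the `A`-invariant `p'`-group `N` are conjugate by an
`A`-fixed element of `N`. -/
lemma exists_fixed_conj [Finite G] (hA : IsPGroup p A) (q : ℕ) [Fact q.Prime] (N : Subgroup G)
    (hN : ∀ a : A, a • N = N) (hp : ¬ p ∣ Nat.card N) (Q Q' : Subgroup G)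
    (hQN : Q ≤ N) (hQN' : Q' ≤ N) (hQ : ∀ a : A, a • Q = Q) (hQ' : ∀ a : A, a • Q' = Q')
    (hc : Nat.card Q = q ^ (Nat.card N).factorization q)
    (hc' : Nat.card Q' = q ^ (Nat.card N).factorization q) :
    ∃ n ∈ N, (∀ a : A, a • n = n) ∧ MulAut.conj n • Q = Q' := by
  let S : Sylow q N := Sylow.ofCard (Q.subgroupOf N) (by
    rw [Nat.card_congr (Subgroup.subgroupOfEquivOfLe hQN).toEquiv, hc])
  let S' : Sylow q N := Sylow.ofCard (Q'.subgroupOf N) (by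
    rw [Nat.card_congr (Subgroup.subgroupOfEquivOfLe hQN').toEquiv, hc'])
  obtain ⟨n₀, hn₀⟩ := MulAction.exists_smul_eq N S S'
  have hn₀' : MulAut.conj (n₀ : G) • Q = Q' := by
    have h1 : MulAut.conj n₀ • Q.subgroupOf N = Q'.subgroupOf N :=
      congrArg Sylow.toSubgroup hn₀
    rw [Subgroup.conj_smul_subgroupOf hQN] at h1
    have h2 := congrArg (Subgroup.map N.subtype) h1
    rwa [Subgroup.map_subgroupOf_eq_of_le (Subgroup.conj_smul_le_of_le hQN n₀),
      Subgroup.map_subgroupOf_eq_of_le hQN'] at h2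
  -- The elements of `N` conjugating `Q` to `Q'` form an `A`-invariant coset of `N_N(Q)`,
  -- whose size is therefore prime to `p`.
  let s : Set G := {n | n ∈ N ∧ MulAut.conj n • Q = Q'}
  have hs : s = (n₀ : G) • ((N ⊓ Subgroup.normalizer (Q : Set G) : Subgroup G) : Set G) := by
    ext n
    rw [Set.mem_smul_set_iff_inv_smul_mem]
    simp only [s, Set.mem_ofPred_eq, smul_eq_mul, SetLike.mem_coe, Subgroup.mem_inf]
    refine and_congr (N.mul_mem_cancel_left (N.inv_mem n₀.2)).symm ?_
    rw [← Subgroup.conjAct_pointwise_smul_iff]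
    change _ ↔ MulAut.conj ((n₀ : G)⁻¹ * n) • Q = Q
    rw [map_mul, mul_smul, map_inv, inv_smul_eq_iff, hn₀']
  have hscard : Nat.card s = Nat.card (N ⊓ Subgroup.normalizer (Q : Set G) : Subgroup G) := by
    rw [hs]
    exact Nat.card_congr (Equiv.Set.image _ _ (MulAction.injective (n₀ : G))).symm
  obtain ⟨n, hn, hfix⟩ := exists_fixed_of_set hA s (by
    rintro a n ⟨hn, hnQ⟩
    have h1 : ∀ x : G, MulAut.conj (a • n) • x = a • (MulAut.conj n • (a⁻¹ • x)) := fun x => by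
      simp [MulAut.smul_def, smul_mul', smul_inv']
    have h2 : MulAut.conj (a • n) • Q = a • (MulAut.conj n • (a⁻¹ • Q)) := by
      ext x
      simp only [Subgroup.mem_smul_pointwise_iff_exists]
      constructor
      · rintro ⟨y, hy, rfl⟩
        exact ⟨_, ⟨_, ⟨y, hy, rfl⟩, rfl⟩, (h1 y).symm⟩
      · rintro ⟨_, ⟨_, ⟨y, hy, rfl⟩, rfl⟩, rfl⟩
        exact ⟨y, hy, h1 y⟩
    refine ⟨?_, ?_⟩
    · rw [← hN a]; exact Subgroup.smul_mem_pointwise_smul n a N hn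
    · rw [h2, hQ, hnQ, hQ']) (by
    rw [hscard]
    exact fun h => hp (h.trans (Subgroup.card_dvd_of_le inf_le_left)))
  exact ⟨n, hn.1, hfix, hn.2⟩

lemma smul_eq_of_le_fixed (T : Subgroup G) (hT : T ≤ FixedPoints.subgroup A G) (a : A) :
    a • T = T := by
  ext x
  rw [Subgroup.mem_pointwise_smul_iff_inv_smul_mem]
  constructor
  · intro h
    have := hT h a
    rw [smul_inv_smul] at this
    rwa [this]
  · intro h
    rwa [hT h a⁻¹]

/-- If `Q` is an `A`-invariant Sylow `q`-subgroup of the `A`-invariant `p'`-group `N`, then `C_Q(A)` is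
a Sylow `q`-subgroup of `C_N(A)`. -/
lemma card_sylow_inf_fixed [Finite G] (hA : IsPGroup p A) (q : ℕ) [Fact q.Prime] (N : Subgroup G)
    (hN : ∀ a : A, a • N = N) (hp : ¬ p ∣ Nat.card N) (Q : Subgroup G)
    (hQN : Q ≤ N) (hQ : ∀ a : A, a • Q = Q)
    (hc : Nat.card Q = q ^ (Nat.card N).factorization q) :
    Nat.card (Q ⊓ FixedPoints.subgroup A G : Subgroup G) =
      q ^ (Nat.card (N ⊓ FixedPoints.subgroup A G : Subgroup G)).factorization q := by
  have hq : q.Prime := Fact.out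
  set C := FixedPoints.subgroup A G with hC
  set D := N ⊓ C with hD
  have hle : Q ⊓ C ≤ D := inf_le_inf_right _ hQN
  apply le_antisymm
  · obtain ⟨k, hk⟩ := IsPGroup.iff_card.mp
      ((IsPGroup.of_card hc).to_le (inf_le_left : Q ⊓ C ≤ Q))
    rw [hk]
    exact Nat.pow_le_pow_right hq.pos ((hq.pow_dvd_iff_le_factorization Nat.card_pos.ne').mp
      (hk ▸ Subgroup.card_dvd_of_le hle))
  -- A Sylow `q`-subgroup of `C_N(A)` is `A`-invariant, hence lies in an invariant Sylow
  -- `q`-subgroup of `N`, and the latter is conjugate to `Q` by an element of `C_N(A)`.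
  · let T : Sylow q D := default
    let T' : Subgroup G := (T : Subgroup D).map D.subtype
    have hT'D : T' ≤ D := Subgroup.map_subtype_le _
    have hT'card : Nat.card T' = q ^ (Nat.card D).factorization q := by
      rw [Subgroup.card_subtype, T.card_eq_multiplicity]
    obtain ⟨Q', hTQ', hQN', hQ', hc'⟩ := exists_invariant_sylow_ge hA q N hN hp T'
      (hT'D.trans inf_le_left) (smul_eq_of_le_fixed T' (hT'D.trans inf_le_right))
      (IsPGroup.of_card hT'card)
    obtain ⟨n, hn, hfix, hconj⟩ := exists_fixed_conj hA q N hN hp Q Q' hQN hQN' hQ hQ' hc hc'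
    have hnC : n ∈ C := hfix
    have hTle : T' ≤ MulAut.conj n • (Q ⊓ C) := by
      rw [Subgroup.smul_inf, hconj, Subgroup.conj_smul_eq_self_of_mem hnC]
      exact le_inf hTQ' (hT'D.trans inf_le_right)
    calc _ = Nat.card T' := hT'card.symm
      _ ≤ Nat.card (MulAut.conj n • (Q ⊓ C) : Subgroup G) := Subgroup.card_le_of_le hTle
      _ = _ := (Nat.card_congr (Subgroup.equivSMul (MulAut.conj n) (Q ⊓ C)).toEquiv).symm

/-- For a `p`-group `A` acting on a `p'`-group `N` and an `A`-invariant subgroup `M ≤ N`, the index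
`|M : C_M(A)|` divides `|N : C_N(A)|`. -/
lemma relIndex_fixed_dvd [Finite G] (hA : IsPGroup p A) (M N : Subgroup G) (hMN : M ≤ N)
    (hM : ∀ a : A, a • M = M) (hN : ∀ a : A, a • N = N) (hp : ¬ p ∣ Nat.card N) :
    (FixedPoints.subgroup A G).relIndex M ∣ (FixedPoints.subgroup A G).relIndex N := by
  set C := FixedPoints.subgroup A G with hC
  have hpM : ¬ p ∣ Nat.card M := fun h => hp (h.trans (Subgroup.card_dvd_of_le hMN))
  have hcard : ∀ K : Subgroup G, C.relIndex K * Nat.card (K ⊓ C : Subgroup G) = Nat.card K := by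
    intro K
    rw [← Subgroup.inf_relIndex_left, mul_comm, ← Subgroup.relIndex_bot_left,
      ← Subgroup.relIndex_bot_left]
    exact Subgroup.relIndex_mul_relIndex _ _ _ bot_le inf_le_left
  have hne : ∀ K : Subgroup G, C.relIndex K ≠ 0 := fun K =>
    Subgroup.index_ne_zero_of_finite
  rw [← Nat.factorization_prime_le_iff_dvd (hne M) (hne N)]
  intro q hq
  have : Fact q.Prime := ⟨hq⟩
  obtain ⟨R, -, hRM, hR, hRc⟩ := exists_invariant_sylow_ge hA q M hM hpM ⊥ bot_le
    (fun a => Subgroup.smul_bot a) IsPGroup.of_bot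
  obtain ⟨Q, hRQ, hQN, hQ, hQc⟩ := exists_invariant_sylow_ge hA q N hN hp R (hRM.trans hMN)
    hR (IsPGroup.of_card hRc)
  have hRC := card_sylow_inf_fixed hA q M hM hpM R hRM hR hRc
  have hQC := card_sylow_inf_fixed hA q N hN hp Q hQN hQ hQc
  -- The `q`-parts of the two indices are `|R : C_R(A)|` and `|Q : C_Q(A)|`; both are powers of
  -- `q`, so the inequality coming from `R ≤ Q` is a divisibility.
  have hle : C.relIndex R ≤ C.relIndex Q := Subgroup.relIndex_le_of_le_right hRQ (hne Q)
  have h1 := hcard R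
  have h2 := hcard Q
  rw [hRC, hRc] at h1
  rw [hQC, hQc] at h2
  have hfac : ∀ K : Subgroup G, (Nat.card K).factorization q =
      (C.relIndex K).factorization q + (Nat.card (K ⊓ C : Subgroup G)).factorization q := by
    intro K
    rw [← hcard K, Nat.factorization_mul (hne K) Nat.card_pos.ne']
    rfl
  rw [hfac M, pow_add] at h1
  rw [hfac N, pow_add] at h2
  have h1' := Nat.eq_of_mul_eq_mul_right (pow_pos hq.pos _) h1
  have h2' := Nat.eq_of_mul_eq_mul_right (pow_pos hq.pos _) h2
  rw [h1', h2'] at hle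
  exact (Nat.pow_le_pow_iff_right hq.one_lt).mp hle
end coprime

/-! ### Numbers of Sylow subgroups and normal subgroups -/

section sylowCount
open scoped Pointwise
variable {p : ℕ} [Fact p.Prime] {G : Type*} [Group G] [Finite G]

/-- The second isomorphism theorem, as an equality of indices, for a subgroup `H` that need not be
normal: `|HK : H| = |K : H ∩ K|`. -/
lemma relIndex_sup_of_normal (H K : Subgroup G) [K.Normal] :
    H.relIndex (H ⊔ K) = H.relIndex K := by
  have hcard : ∀ X Y : Subgroup G, Nat.card (X ⊓ Y : Subgroup G) * X.relIndex Y = Nat.card Y := by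
    intro X Y
    rw [← Subgroup.inf_relIndex_right, ← Subgroup.relIndex_bot_left, ← Subgroup.relIndex_bot_left]
    exact Subgroup.relIndex_mul_relIndex _ _ _ bot_le inf_le_right
  have h1 := hcard H (H ⊔ K)
  have h2 := hcard K (H ⊔ K)
  have h3 := hcard K H
  have h4 := hcard H K
  rw [inf_eq_left.mpr le_sup_left] at h1
  rw [inf_eq_left.mpr le_sup_right, Subgroup.relIndex_sup_right] at h2
  rw [inf_comm] at h3
  have hH : 0 < Nat.card H := Nat.card_pos
  apply Nat.eq_of_mul_eq_mul_left hH
  rw [h1, ← h2, ← h4, ← h3]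
  ring

/-- An epimorphism `f` maps `N_G(P)` onto the normalizer of `f(P)`: if `f g` normalizes `f(P)`, then
`P` and its conjugate by `g` are both Sylow in the preimage of `f(P)`, hence conjugate there. -/
lemma map_normalizer_sylow {G' : Type*} [Group G'] (f : G →* G') (hf : Function.Surjective f)
    (P : Sylow p G) :
    (Subgroup.normalizer ((P : Subgroup G) : Set G)).map f =
      Subgroup.normalizer (((P : Subgroup G).map f : Subgroup G') : Set G') := by
  refine le_antisymm (Subgroup.le_normalizer_map f) fun y hy => ?_
  obtain ⟨g, rfl⟩ := hf y
  have hPM : (P : Subgroup G) ≤ ((P : Subgroup G).map f).comap f := Subgroup.le_comap_map _ _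
  have hgPM : ((g • P : Sylow p G) : Subgroup G) ≤ ((P : Subgroup G).map f).comap f := by
    rintro _ ⟨x, hx, rfl⟩
    have := (Subgroup.mem_normalizer_iff.mp hy (f x)).mp (Subgroup.mem_map_of_mem f hx)
    simpa using this
  obtain ⟨x, hx⟩ := MulAction.exists_smul_eq (((P : Subgroup G).map f).comap f)
    (P.subtype hPM) ((g • P).subtype hgPM)
  rw [Sylow.smul_subtype] at hx
  have hx' : (x : G) • P = g • P := Sylow.subtype_injective hx
  have hn : (x : G)⁻¹ * g ∈ Subgroup.normalizer ((P : Subgroup G) : Set G) := by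
    apply Sylow.smul_eq_iff_mem_normalizer.mp
    rw [mul_smul, ← hx', inv_smul_smul]
  have hfx : f x ∈ (Subgroup.normalizer ((P : Subgroup G) : Set G)).map f :=
    Subgroup.map_mono Subgroup.le_normalizer x.2
  have := mul_mem hfx (Subgroup.mem_map_of_mem f hn)
  rwa [← map_mul, mul_inv_cancel_left] at this

/-- With `N = ker f`, this is the factorization `ν_p(G) = ν_p(G/N) · |N : N_N(P)|`. -/
lemma card_sylow_eq_mul {G' : Type*} [Group G'] (f : G →* G') (hf : Function.Surjective f)
    (P : Sylow p G) :
    Nat.card (Sylow p G) = Nat.card (Sylow p G') *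
      (Subgroup.normalizer ((P : Subgroup G) : Set G)).relIndex f.ker := by
  have : Finite G' := Finite.of_surjective f hf
  rw [P.card_eq_index_normalizer, (P.mapSurjective hf).card_eq_index_normalizer,
    ← Sylow.coe_coe P, ← Sylow.coe_coe (P.mapSurjective hf), Sylow.coe_mapSurjective, ← map_normalizer_sylow f hf P, Subgroup.index_map,
    f.range_eq_top_of_surjective hf, Subgroup.index_top, mul_one, ← relIndex_sup_of_normal,
    mul_comm]
  exact (Subgroup.relIndex_mul_index le_sup_left).symm

/-- The centralizer of `S`, written as the fixed points of `S` acting on `G` by conjugation. The acting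
group is the image of `S` in `MulAut G`, which carries the right action (`S` itself already acts on
`G` by left multiplication). -/
abbrev conjFixed (S : Subgroup G) : Subgroup G :=
  FixedPoints.subgroup (S.map (MulAut.conj : G →* MulAut G)) G

omit [Finite G] in
lemma mem_conjFixed {S : Subgroup G} {x : G} : x ∈ conjFixed S ↔ ∀ s ∈ S, s * x * s⁻¹ = x := by
  rw [FixedPoints.mem_subgroup]
  constructor
  · intro h s hs
    exact h ⟨_, Subgroup.mem_map_of_mem MulAut.conj hs⟩
  · rintro h ⟨_, s, hs, rfl⟩
    exact h s hs

omit [Finite G] in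
lemma conjFixed_smul_eq {S M : Subgroup G} (h : S ≤ Subgroup.normalizer (M : Set G))
    (a : S.map (MulAut.conj : G →* MulAut G)) : a • M = M := by
  obtain ⟨_, s, hs, rfl⟩ := a
  exact Subgroup.conjAct_pointwise_smul_eq_self (h hs)

/-- If a `p`-group `S` normalizes a `p'`-group `M`, then `N_M(S) = C_M(S)`, because
`[S, N_M(S)] ≤ S ∩ M = 1`. -/
lemma relIndex_normalizer_eq (S M : Subgroup G) (hS : IsPGroup p S)
    (hM : ¬ p ∣ Nat.card M) (h : S ≤ Subgroup.normalizer (M : Set G)) :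
    (Subgroup.normalizer (S : Set G)).relIndex M = (conjFixed S).relIndex M := by
  have hbot : S ⊓ M = ⊥ := by
    obtain ⟨k, hk⟩ := IsPGroup.iff_card.mp hS
    rw [← disjoint_iff]
    apply Subgroup.disjoint_of_coprime_natCard
    rw [hk]
    exact Nat.Coprime.pow_left _ ((Nat.Prime.coprime_iff_not_dvd Fact.out).mpr hM)
  have : Subgroup.normalizer (S : Set G) ⊓ M = conjFixed S ⊓ M := by
    ext x
    simp only [Subgroup.mem_inf, and_congr_left_iff]
    intro hx
    rw [mem_conjFixed]
    constructor
    · intro hn s hs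
      have h1 : s * (x * s⁻¹ * x⁻¹) ∈ S :=
        mul_mem hs ((Subgroup.mem_normalizer_iff.mp hn _).mp (inv_mem hs))
      have h2 : (s * x * s⁻¹) * x⁻¹ ∈ M :=
        mul_mem ((Subgroup.mem_normalizer_iff.mp (h hs) _).mp hx) (inv_mem hx)
      have h3 : (s * x * s⁻¹) * x⁻¹ ∈ S ⊓ M := ⟨by simpa [mul_assoc] using h1, h2⟩
      rw [hbot, Subgroup.mem_bot, mul_inv_eq_one] at h3
      exact h3
    · intro hc
      rw [Subgroup.mem_normalizer_iff]
      have key : ∀ s ∈ S, x * s * x⁻¹ = s := fun s hs => by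
        have h1 := hc s hs
        rw [mul_inv_eq_iff_eq_mul] at h1 ⊢
        exact h1.symm
      intro s
      refine ⟨fun hs => (key s hs).symm ▸ hs, fun hs => ?_⟩
      have h1 := key _ hs
      have h2 : x * s * x⁻¹ = s := by
        have := congrArg (fun t => x⁻¹ * t * x) h1
        simpa [mul_assoc] using this
      rwa [h2] at hs
  rw [← Subgroup.inf_relIndex_right, this, Subgroup.inf_relIndex_right]

/-- For a normal `p'`-subgroup `N` of `G`, and Sylow subgroups `S ≤ P` of `U ≤ G` and of `G`, the index
`|N ∩ U : N_{N ∩ U}(S)|` divides `|N : N_N(P)|`: it divides `|N : C_N(S)|` by coprime action, and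
`C_N(P) ≤ C_N(S)`. -/
lemma relIndex_normalizer_dvd (N : Subgroup G) [N.Normal] (hN : ¬ p ∣ Nat.card N)
    (U : Subgroup G) (S : Sylow p U) (P : Sylow p G)
    (hSP : (S : Subgroup U).map U.subtype ≤ P) :
    (Subgroup.normalizer ((S : Subgroup U) : Set U)).relIndex (N.subgroupOf U) ∣
      (Subgroup.normalizer ((P : Subgroup G) : Set G)).relIndex N := by
  set S' : Subgroup G := (S : Subgroup U).map U.subtype with hS'
  have hS'U : S' ≤ U := Subgroup.map_subtype_le _
  have hS'p : IsPGroup p S' := S.2.map _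
  have hSS' : (S : Subgroup U) = S'.subgroupOf U :=
    (Subgroup.comap_map_eq_self_of_injective U.subtype_injective _).symm
  have hnU : S' ≤ Subgroup.normalizer ((N ⊓ U : Subgroup G) : Set G) :=
    (le_inf Subgroup.le_normalizer_of_normal (hS'U.trans Subgroup.le_normalizer)).trans
      Subgroup.inf_normalizer_le_normalizer_inf
  have hNU : ¬ p ∣ Nat.card (N ⊓ U : Subgroup G) :=
    fun h => hN (h.trans (Subgroup.card_dvd_of_le inf_le_left))
  rw [hSS', ← Subgroup.subgroupOf_normalizer_eq hS'U, ← Subgroup.inf_subgroupOf_right N U,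
    Subgroup.relIndex_subgroupOf inf_le_right, relIndex_normalizer_eq S' _ hS'p hNU hnU,
    relIndex_normalizer_eq (P : Subgroup G) N P.2 hN Subgroup.le_normalizer_of_normal]
  refine (relIndex_fixed_dvd (hS'p.map _) (N ⊓ U) N inf_le_left (conjFixed_smul_eq hnU)
    (conjFixed_smul_eq Subgroup.le_normalizer_of_normal) hN).trans
    (Subgroup.relIndex_dvd_of_le_left _ ?_)
  intro x hx
  rw [mem_conjFixed] at hx ⊢
  exact fun s hs => hx s (hSP hs)

end sylowCount

/-! ### Normal subgroups of `p`-solvable groups -/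

section solvable

lemma IsPSolvable.of_surjective {p : ℕ} [Fact p.Prime] {G G' : Type*} [Group G] [Group G']
    (h : IsPSolvable p G) (f : G →* G') (hf : Function.Surjective f) : IsPSolvable p G' := by
  obtain ⟨n, H, h0, h1, hH⟩ := h
  refine ⟨n, fun i => (H i).map f, by simp [h0], by
    simp only [h1]; exact Subgroup.map_top_of_surjective f hf, fun i => ?_⟩
  obtain ⟨hle, hn, hc⟩ := hH i
  refine ⟨Subgroup.map_mono hle, ?_, ?_⟩
  · rw [Subgroup.normal_subgroupOf_iff_le_normalizer (Subgroup.map_mono hle)]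
    rw [Subgroup.normal_subgroupOf_iff_le_normalizer hle] at hn
    exact (Subgroup.map_mono hn).trans (Subgroup.le_normalizer_map f)
  · have hdvd : ((H i.castSucc).map f).relIndex ((H i.succ).map f) ∣
        (H i.castSucc).relIndex (H i.succ) := by
      refine dvd_trans (Subgroup.index_dvd_of_le ?_)
        (Subgroup.index_map_dvd ((H i.castSucc).subgroupOf (H i.succ))
          (f.subgroupMap_surjective (H i.succ)))
      rintro _ ⟨x, hx, rfl⟩
      exact Subgroup.mem_map_of_mem f hx
    rcases hc with ⟨k, hk⟩ | hc
    · obtain ⟨m, -, hm⟩ := (Nat.dvd_prime_pow Fact.out).mp (hdvd.trans (dvd_of_eq hk))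
      exact Or.inl ⟨m, hm⟩
    · exact Or.inr fun h => hc (h.trans hdvd)

/-- `G` has a nontrivial normal subgroup whose order satisfies `Q`. It is used for the predicates
“is a power of `p`” and “is prime to `p`”. -/
def HasNormal (Q : ℕ → Prop) (G : Type*) [Group G] : Prop :=
  ∃ X : Subgroup G, X.Normal ∧ X ≠ ⊥ ∧ Q (Nat.card X)

lemma HasNormal.of_equiv {Q : ℕ → Prop} {G G' : Type*} [Group G] [Group G']
    (h : HasNormal Q G) (e : G ≃* G') : HasNormal Q G' := by
  obtain ⟨X, hn, hX, hQ⟩ := h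
  refine ⟨X.map (e : G →* G'), hn.map _ e.surjective, ?_, ?_⟩
  · rwa [Ne, Subgroup.map_eq_bot_iff_of_injective _ e.injective]
  · rwa [Subgroup.card_map_of_injective e.injective]

/-- If `Q` passes to products and divisors, a maximal normal subgroup with order satisfying `Q` contains
all others, since the order of a join of two normal subgroups divides the product of their orders.
Hence it is characteristic. -/
lemma HasNormal.exists_characteristic {Q : ℕ → Prop} (hmul : ∀ a b, Q a → Q b → Q (a * b))
    (hdvd : ∀ a b, a ∣ b → Q b → Q a) {G : Type*} [Group G] [Finite G] (h : HasNormal Q G) :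
    ∃ X : Subgroup G, X.Characteristic ∧ X ≠ ⊥ ∧ Q (Nat.card X) := by
  obtain ⟨X₀, hn₀, hX₀, hQ₀⟩ := h
  obtain ⟨X, hle, hmax⟩ := Set.Finite.exists_le_maximal
    (s := {X : Subgroup G | X.Normal ∧ Q (Nat.card X)}) (Set.toFinite _) ⟨hn₀, hQ₀⟩
  obtain ⟨hn, hQ⟩ := hmax.prop
  refine ⟨X, Subgroup.characteristic_iff_map_le.mpr fun φ => ?_, ?_, hQ⟩
  · have hφn : (X.map φ.toMonoidHom).Normal := hn.map _ φ.surjective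
    have hφc : Nat.card (X.map φ.toMonoidHom) = Nat.card X :=
      Subgroup.card_map_of_injective φ.injective
    refine le_sup_right.trans (hmax.le_of_ge (y := X ⊔ X.map φ.toMonoidHom)
      ⟨inferInstance, ?_⟩ le_sup_left)
    refine hdvd _ (Nat.card X * Nat.card X) ?_ (hmul _ _ hQ hQ)
    rw [← Subgroup.relIndex_bot_left (X ⊔ _),
      ← Subgroup.relIndex_mul_relIndex ⊥ X _ bot_le le_sup_left, Subgroup.relIndex_sup_left,
      Subgroup.relIndex_bot_left]
    exact mul_dvd_mul_left _ (hφc ▸ Subgroup.relIndex_dvd_card _ _)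
  · rintro rfl
    exact hX₀ (le_bot_iff.mp hle)

lemma HasNormal.of_normal {Q : ℕ → Prop} (hmul : ∀ a b, Q a → Q b → Q (a * b))
    (hdvd : ∀ a b, a ∣ b → Q b → Q a) {G : Type*} [Group G] [Finite G] (K : Subgroup G)
    [K.Normal] (h : HasNormal Q K) : HasNormal Q G := by
  obtain ⟨X, hc, hX, hQ⟩ := h.exists_characteristic hmul hdvd
  refine ⟨X.map K.subtype, inferInstance, ?_, ?_⟩
  · rwa [Ne, Subgroup.map_eq_bot_iff_of_injective _ K.subtype_injective]
  · rwa [Subgroup.card_subtype]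

/-- A nontrivial `p`-solvable group has a nontrivial normal subgroup that is a `p`-group or a
`p'`-group. Such a subgroup is carried up the subnormal series by passing to characteristic
subgroups. -/
lemma IsPSolvable.exists_normal {p : ℕ} [Fact p.Prime] {G : Type*} [Group G] [Finite G]
    [Nontrivial G] (h : IsPSolvable p G) :
    ∃ N : Subgroup G, N.Normal ∧ N ≠ ⊥ ∧ (IsPGroup p N ∨ ¬ p ∣ Nat.card N) := by
  have hp : p.Prime := Fact.out
  let Q₁ : ℕ → Prop := fun n => ∃ k, n = p ^ k
  let Q₂ : ℕ → Prop := fun n => ¬ p ∣ n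
  have hmul₁ : ∀ a b, Q₁ a → Q₁ b → Q₁ (a * b) := by
    rintro _ _ ⟨k, rfl⟩ ⟨l, rfl⟩
    exact ⟨k + l, (pow_add _ _ _).symm⟩
  have hdvd₁ : ∀ a b, a ∣ b → Q₁ b → Q₁ a := by
    rintro a _ hab ⟨k, rfl⟩
    obtain ⟨m, -, hm⟩ := (Nat.dvd_prime_pow hp).mp hab
    exact ⟨m, hm⟩
  have hmul₂ : ∀ a b, Q₂ a → Q₂ b → Q₂ (a * b) := fun a b ha hb h =>
    (hp.dvd_mul.mp h).elim ha hb
  have hdvd₂ : ∀ a b, a ∣ b → Q₂ b → Q₂ a := fun a b hab hb h => hb (h.trans hab)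
  obtain ⟨n, H, h0, h1, hH⟩ := h
  have key : ∀ i, H i = ⊥ ∨ HasNormal Q₁ (H i) ∨ HasNormal Q₂ (H i) := by
    intro i
    induction i using Fin.induction with
    | zero => exact Or.inl h0
    | succ i ih =>
      obtain ⟨hle, hn, hc⟩ := hH i
      rcases ih with ih | ih | ih
      · by_cases hs : H i.succ = ⊥
        · exact Or.inl hs
        right
        have hc' : Nat.card (H i.succ ⧸ (H i.castSucc).subgroupOf (H i.succ)) =
            Nat.card (H i.succ) := by
          change (H i.castSucc).relIndex (H i.succ) = _
          rw [ih, Subgroup.relIndex_bot_left]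
        rw [hc'] at hc
        have hne : (⊤ : Subgroup (H i.succ)) ≠ ⊥ := by
          have := (Subgroup.nontrivial_iff_ne_bot _).mpr hs
          exact top_ne_bot
        refine hc.imp (fun hc => ⟨⊤, inferInstance, hne, ?_⟩) (fun hc => ⟨⊤, inferInstance, hne, ?_⟩)
        · rwa [Subgroup.card_top]
        · rwa [Subgroup.card_top]
      · exact Or.inr (Or.inl (HasNormal.of_normal hmul₁ hdvd₁ _
          (ih.of_equiv (Subgroup.subgroupOfEquivOfLe hle).symm)))
      · exact Or.inr (Or.inr (HasNormal.of_normal hmul₂ hdvd₂ _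
          (ih.of_equiv (Subgroup.subgroupOfEquivOfLe hle).symm)))
  have hlast := key (Fin.last n)
  rw [h1] at hlast
  rcases hlast with h | h | h
  · exact absurd h top_ne_bot
  · obtain ⟨N, hN, hN', hQ⟩ := h.of_equiv Subgroup.topEquiv
    exact ⟨N, hN, hN', Or.inl (IsPGroup.iff_card.mpr hQ)⟩
  · obtain ⟨N, hN, hN', hQ⟩ := h.of_equiv Subgroup.topEquiv
    exact ⟨N, hN, hN', Or.inr hQ⟩

end solvable

/-! ### The divisibility -/

/-- The divisibility for an arbitrary subgroup `U`, by induction on `|G|`. No compatibility between `U`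
and a given Sylow subgroup is needed, as any Sylow subgroup of `U` lies in one of `G`. -/
theorem card_sylow_dvd_aux {p : ℕ} [Fact p.Prime] (n : ℕ) :
    ∀ (G : Type*) [Group G] [Finite G], Nat.card G = n → IsPSolvable p G →
      ∀ U : Subgroup G, Nat.card (Sylow p U) ∣ Nat.card (Sylow p G) := by
  induction n using Nat.strong_induction_on with
  | _ n ih =>
  intro G _ _ hcard hG U
  rcases subsingleton_or_nontrivial G with hsub | hnt
  -- When `G` is trivial, so is `U`, and `U` has exactly one Sylow subgroup.
  · have : Nat.card (Sylow p U) ∣ Nat.card U := by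
      rw [(default : Sylow p U).card_eq_index_normalizer]
      exact Subgroup.index_dvd_card _
    rw [Nat.card_unique (α := U)] at this
    exact this.trans (one_dvd _)
  obtain ⟨N, hN, hNbot, hNp⟩ := hG.exists_normal
  have hlt : Nat.card (G ⧸ N) < n := by
    rw [← hcard, Subgroup.card_eq_card_quotient_mul_card_subgroup N]
    exact lt_mul_of_one_lt_right Nat.card_pos ((Subgroup.one_lt_card_iff_ne_bot N).mpr hNbot)
  let f : U →* G ⧸ N := (QuotientGroup.mk' N).comp U.subtype
  have hker : f.rangeRestrict.ker = N.subgroupOf U := by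
    rw [MonoidHom.ker_rangeRestrict, ← MonoidHom.comap_ker, QuotientGroup.ker_mk']
    rfl
  let S : Sylow p U := default
  obtain ⟨P, hSP⟩ := (S.2.map U.subtype).exists_le_sylow
  rw [card_sylow_eq_mul f.rangeRestrict f.rangeRestrict_surjective S,
    card_sylow_eq_mul (QuotientGroup.mk' N) (QuotientGroup.mk'_surjective N) P, hker,
    QuotientGroup.ker_mk']
  refine mul_dvd_mul (ih _ hlt (G ⧸ N) rfl
    (hG.of_surjective _ (QuotientGroup.mk'_surjective N)) f.range) ?_
  rcases hNp with hNp | hNp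
  -- A normal `p`-subgroup lies in every Sylow `p`-subgroup, so the factor for `U` is `1`.
  · have h1 : N.subgroupOf U ≤ S :=
      IsPGroup.le_sylow_of_normal (N := N.subgroupOf U) hNp.comap_subtype S
    rw [Subgroup.relIndex_eq_one.mpr (h1.trans Subgroup.le_normalizer)]
    exact one_dvd _
  · exact relIndex_normalizer_dvd N hNp U S P hSP

/-- If `G` is a finite `p`-solvable group, `P ∈ Syl_p(G)` and `U ≤ G` is such that
`P ∩ U ∈ Syl_p(U)`, then the number of Sylow `p`-subgroups of `U` divides the
number of Sylow `p`-subgroups of `G`. -/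
theorem card_sylow_dvd_of_pSolvable
    (p : ℕ) [Fact p.Prime] (G : Type*) [Group G] [Finite G]
    (hGsol : IsPSolvable p G)
    (U : Subgroup G) (P : Sylow p G)
    (hSyl : ∃ S : Sylow p ↥U, (S : Subgroup ↥U) = (P : Subgroup G).subgroupOf U) :
    Nat.card (Sylow p ↥U) ∣ Nat.card (Sylow p G) :=
  card_sylow_dvd_aux _ G rfl hGsol U
end

section
/- Let $p$ be a prime, $G$ a finite group, $K = O_p(G)$ the largest normal $p$-subgroup of $G$, $\kappa$ an irreducible character of $K$, and $\chi$ an irreducible character of $G$ of degree coprime to $p$ lying over $\kappa$. Then $\kappa$ is linear (has degree $1$) and $\kappa$ extends to an irreducible character of its inertia group $G_\kappa$. -/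
/-!
Write `V` for the module affording `χ`, so `p ∤ dim V`, and `K = O_p(G)`, a normal `p`-subgroup.
The proof uses determinants, instead of the fact that character degrees divide the group order.

* Let a `p`-group act irreducibly on a space of dimension `n` prime to `p`. By induction along the
  upper central series every element acts as a scalar: if `⁅x, g⁆` acts as the scalar `c`, then
  `c ^ n = 1` because a commutator has determinant `1`, and `c` has `p`-power order, so `c = 1`;
  hence `x` commutes with the whole action and Schur's lemma applies (`scalar_of_pGroup`).
  Splitting off summands by Maschke's theorem, every representation of a `p`-group in dimension
  prime to `p` contains a common eigenvector (`exists_eigenvector`).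
* Applied to `V` restricted to `K`, this gives a nonzero weight space `V_l`. Its `G`-translates are
  again weight spaces, and they span `V` since `V` is irreducible. Hence `V` is the direct sum of
  its `K`-weight spaces, the nonzero ones are `G`-conjugate and so of equal dimension
  (`finrank_wt_eq`), and this dimension is prime to `p` (`exists_wt_not_dvd`).
* As `[χ_K, κ] ≠ 0`, some weight `l` of `V` has `[l, κ] ≠ 0`, and then the module affording `κ`
  has an `l`-eigenvector; being irreducible it is one-dimensional and `κ = l` (`exists_weight`).
* The inertia group `T` stabilizes `V_κ`. With `m = dim V_κ`, the determinant of `T` on `V_κ`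
  restricts to `κ ^ m` on `K`. As `p ∤ m` and `κ` has `p`-power order, a suitable power of this
  determinant is a linear character of `T` extending `κ` (`exists_hom_extension`).
-/


/-- `χ : G → ℂ` is an irreducible (complex) character of `G`. -/
def IsIrrChar (G : Type) [Group G] (χ : G → ℂ) : Prop :=
  ∃ V : FDRep ℂ G, CategoryTheory.Simple V ∧ χ = FDRep.character V

/-- `χ` lies over `θ ∈ Irr(N)`, i.e. `θ` is a constituent of the restriction of `χ`
to `N`: the scalar product `[χ_N, θ]` is nonzero. -/
def LiesOver {G : Type} [Group G] (N : Subgroup G) (χ : G → ℂ)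
    (θ : ↥N → ℂ) : Prop :=
  ∑ᶠ k : ↥N, χ ↑k * (starRingEnd ℂ) (θ k) ≠ 0

/-- The largest normal `p`-subgroup `O_p(G)` of a group `G`. -/
def pCore (p : ℕ) (G : Type) [Group G] : Subgroup G :=
  ⨆ H ∈ {H : Subgroup G | H.Normal ∧ IsPGroup p H}, H

open CategoryTheory Module
open scoped commutatorElement

/-! ### Representations of `p`-groups in dimension prime to `p` -/

/-- The representation `ρ` has no invariant subspace besides `⊥` and `⊤`. This is irreducibility,
except that the zero representation is allowed. -/
def NoProperInvariant {G V : Type} [Group G] [AddCommGroup V] [Module ℂ V]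
    (ρ : Representation ℂ G V) : Prop :=
  ∀ W : Submodule ℂ V, (∀ g, ∀ w ∈ W, ρ g w ∈ W) → W = ⊥ ∨ W = ⊤

theorem eq_top_of_mem {G V : Type} [Group G] [AddCommGroup V] [Module ℂ V]
    {ρ : Representation ℂ G V} (hρ : NoProperInvariant ρ) (W : Submodule ℂ V)
    (hW : ∀ g, ∀ w ∈ W, ρ g w ∈ W) {v : V} (hv : v ∈ W) (hv0 : v ≠ 0) : W = ⊤ := by
  rcases hρ W hW with h | h
  · exact absurd ((Submodule.mem_bot ℂ).1 (h ▸ hv)) hv0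
  · exact h

/-- Schur's lemma over `ℂ`. -/
theorem schur {G V : Type} [Group G] [AddCommGroup V] [Module ℂ V] [FiniteDimensional ℂ V]
    [Nontrivial V] {ρ : Representation ℂ G V} (hρ : NoProperInvariant ρ) (f : End ℂ V)
    (hf : ∀ g, Commute (ρ g) f) : ∃ c : ℂ, f = c • 1 := by
  obtain ⟨c, hc⟩ := Module.End.exists_eigenvalue f
  obtain ⟨v, hv⟩ := hc.exists_hasEigenvector
  have htop : f.eigenspace c = ⊤ := by
    refine eq_top_of_mem hρ _ (fun g w hw => ?_) hv.1 hv.2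
    rw [Module.End.mem_eigenspace_iff] at hw ⊢
    have h := LinearMap.congr_fun (hf g).eq w
    simp only [Module.End.mul_apply] at h
    rw [← h, hw, map_smul]
  refine ⟨c, LinearMap.ext fun w => ?_⟩
  have hw : w ∈ f.eigenspace c := htop ▸ Submodule.mem_top
  simpa using Module.End.mem_eigenspace_iff.1 hw

theorem eq_one_of_pow {p n a : ℕ} [hp : Fact p.Prime] (hn : ¬ p ∣ n) {c : ℂ}
    (h1 : c ^ n = 1) (h2 : c ^ p ^ a = 1) : c = 1 := by
  have hco : Nat.Coprime n (p ^ a) :=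
    Nat.Coprime.pow_right a ((Nat.Prime.coprime_iff_not_dvd hp.out).2 hn).symm
  have h3 := Nat.dvd_gcd (orderOf_dvd_of_pow_eq_one h1) (orderOf_dvd_of_pow_eq_one h2)
  rw [hco] at h3
  exact orderOf_eq_one_iff.1 (Nat.dvd_one.1 h3)

theorem scalar_pow_card {Q V : Type} [Group Q] [Finite Q] [AddCommGroup V] [Module ℂ V]
    {ρ : Representation ℂ Q V} {v : V} (hv : v ≠ 0) {q : Q} {c : ℂ} (h : ρ q v = c • v) :
    c ^ Nat.card Q = 1 := by
  have key : ∀ n : ℕ, ρ (q ^ n) v = c ^ n • v := by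
    intro n
    induction n with
    | zero => simp
    | succ n ih => rw [pow_succ, map_mul, Module.End.mul_apply, h, map_smul, ih, smul_smul, pow_succ']
  have h1 := key (Nat.card Q)
  rw [pow_card_eq_one', map_one, Module.End.one_apply] at h1
  by_contra hne
  have h2 : (c ^ Nat.card Q - 1) • v = 0 := by rw [sub_smul, ← h1, one_smul, sub_self]
  rcases smul_eq_zero.1 h2 with h3 | h3
  · exact hne (sub_eq_zero.1 h3)
  · exact hv h3

/-- A `p`-group acting irreducibly in dimension prime to `p` acts by scalars. -/
theorem scalar_of_pGroup {p : ℕ} [Fact p.Prime] {Q V : Type} [Group Q] [Finite Q]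
    (hQ : IsPGroup p Q) [AddCommGroup V] [Module ℂ V] [FiniteDimensional ℂ V] [Nontrivial V]
    {ρ : Representation ℂ Q V} (hρ : NoProperInvariant ρ) (hdim : ¬ p ∣ finrank ℂ V) (q : Q) :
    ∃ c : ℂ, ρ q = c • 1 := by
  obtain ⟨a, ha⟩ := IsPGroup.iff_card.1 hQ
  have key : ∀ n : ℕ, ∀ x ∈ Subgroup.upperCentralSeries Q n, ∃ c : ℂ, ρ x = c • 1 := by
    intro n
    induction n with
    | zero =>
      intro x hx
      rw [Subgroup.upperCentralSeries_zero, Subgroup.mem_bot] at hx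
      exact ⟨1, by simp [hx]⟩
    | succ n ih =>
      intro x hx
      refine schur hρ _ fun g => ?_
      obtain ⟨c, hc⟩ := ih _ (Subgroup.mem_upperCentralSeries_succ_iff.1 hx g)
      have hdet : c ^ finrank ℂ V = 1 := by
        have h1 : LinearMap.det (ρ ⁅x, g⁆) = 1 := by
          have h2 : (LinearMap.det.comp ρ) ⁅x, g⁆ = 1 := by
            have hinv : ∀ y : Q, (LinearMap.det.comp ρ) y * (LinearMap.det.comp ρ) y⁻¹ = 1 :=
              fun y => by rw [← map_mul, mul_inv_cancel, map_one]
            rw [commutatorElement_def, map_mul, map_mul, map_mul]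
            linear_combination (LinearMap.det.comp ρ) g * (LinearMap.det.comp ρ) g⁻¹ * hinv x +
              hinv g
          exact h2
        rw [hc, LinearMap.det_smul] at h1
        simpa using h1
      obtain ⟨v, hv⟩ := exists_ne (0 : V)
      have hcard : c ^ p ^ a = 1 := by
        rw [← ha]
        exact scalar_pow_card (ρ := ρ) hv (q := ⁅x, g⁆) (by rw [hc]; simp)
      rw [eq_one_of_pow hdim hdet hcard, one_smul] at hc
      have h4 : x * g = ⁅x, g⁆ * (g * x) := by simp [commutatorElement_def, mul_assoc]
      change ρ g * ρ x = ρ x * ρ g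
      rw [← map_mul ρ x g, h4, map_mul, hc, one_mul, map_mul]
  have := hQ.isNilpotent
  obtain ⟨n, hn⟩ := Group.IsNilpotent.nilpotent Q
  exact key n q (hn ▸ Subgroup.mem_top q)

/-- A `p`-group acting on a space of dimension prime to `p` has a common eigenvector. The
dimension is named `n` for the sake of strong induction on it. -/
theorem exists_eigenvector {p : ℕ} [Fact p.Prime] {Q : Type} [Group Q] [Finite Q]
    (hQ : IsPGroup p Q) (n : ℕ) : ∀ (V : Type) [AddCommGroup V] [Module ℂ V]
    [FiniteDimensional ℂ V] (ρ : Representation ℂ Q V), finrank ℂ V = n → ¬ p ∣ n →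
    ∃ v : V, v ≠ 0 ∧ ∀ q, ∃ c : ℂ, ρ q v = c • v := by
  induction n using Nat.strong_induction_on with
  | _ n ih =>
  intro V _ _ _ ρ hn hp
  have : Nontrivial V := by
    apply Module.nontrivial_of_finrank_pos (R := ℂ)
    rw [hn]
    exact Nat.pos_of_ne_zero fun h => hp (h ▸ dvd_zero p)
  by_cases hρ : NoProperInvariant ρ
  · obtain ⟨v, hv⟩ := exists_ne (0 : V)
    refine ⟨v, hv, fun q => ?_⟩
    obtain ⟨c, hc⟩ := scalar_of_pGroup hQ hρ (hn ▸ hp) q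
    exact ⟨c, by rw [hc]; simp⟩
  · unfold NoProperInvariant at hρ
    push Not at hρ
    obtain ⟨W, hW, hbot, htop⟩ := hρ
    have hdesc : ∀ S : Subrepresentation ρ, S.toSubmodule ≠ ⊤ →
        ¬ p ∣ finrank ℂ S.toSubmodule → ∃ v : V, v ≠ 0 ∧ ∀ q, ∃ c : ℂ, ρ q v = c • v := by
      intro S hS hpS
      obtain ⟨v, hv0, hv⟩ := ih _ (hn ▸ Submodule.finrank_lt hS) S.toSubmodule
        S.toRepresentation rfl hpS
      refine ⟨v, fun h => hv0 (Subtype.ext h), fun q => ?_⟩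
      obtain ⟨c, hc⟩ := hv q
      exact ⟨c, congrArg Subtype.val hc⟩
    let S : Subrepresentation ρ := ⟨W, fun g v hv => hW g v hv⟩
    have : NeZero (Nat.card Q : ℂ) := ⟨by exact_mod_cast Nat.card_pos.ne'⟩
    obtain ⟨S', hS'⟩ := exists_isCompl S
    have hc : IsCompl S.toSubmodule S'.toSubmodule := by
      constructor
      · rw [disjoint_iff, ← Subrepresentation.toSubmodule_inf, hS'.inf_eq_bot]; rfl
      · rw [codisjoint_iff, ← Subrepresentation.toSubmodule_sup, hS'.sup_eq_top]; rfl
    have hadd := Submodule.finrank_add_eq_of_isCompl hc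
    by_cases h1 : p ∣ finrank ℂ S.toSubmodule
    · refine hdesc S' (fun h => hbot ?_) fun h2 => hp ?_
      · have := hc.inf_eq_bot
        rwa [h, inf_top_eq] at this
      · rw [← hn, ← hadd]
        exact dvd_add h1 h2
    · exact hdesc S htop h1

/-! ### Weight spaces -/

/-- The weight space of `l` in `σ`: the vectors on which every `q` acts as the scalar `l q`.
The function `l` need not be multiplicative; if it is not, the weight space is zero. -/
def wt {Q V : Type} [Group Q] [AddCommGroup V] [Module ℂ V] (σ : Representation ℂ Q V)
    (l : Q → ℂ) : Submodule ℂ V := ⨅ q, Module.End.eigenspace (σ q) (l q)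

theorem mem_wt {Q V : Type} [Group Q] [AddCommGroup V] [Module ℂ V]
    {σ : Representation ℂ Q V} {l : Q → ℂ} {v : V} : v ∈ wt σ l ↔ ∀ q, σ q v = l q • v := by
  simp [wt]

/-- The hypothesis that the weight spaces span makes the operators commute, as Mathlib's
independence theorem for joint eigenspaces requires. -/
theorem iSupIndep_wt {Q V : Type} [Group Q] [AddCommGroup V] [Module ℂ V]
    {σ : Representation ℂ Q V} (htop : ⨆ l, wt σ l = ⊤) : iSupIndep (wt σ) := by
  have hcomm : ∀ q r, Commute (σ q) (σ r) := by
    intro q r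
    refine LinearMap.ext fun v => ?_
    have hv : v ∈ ⨆ l, wt σ l := htop ▸ Submodule.mem_top
    induction hv using Submodule.iSup_induction' with
    | mem l v hv =>
      rw [mem_wt] at hv
      simp only [Module.End.mul_apply, hv, map_smul, smul_smul, mul_comm]
    | zero => simp
    | add x y _ _ hx hy => rw [map_add, map_add, hx, hy]
  refine (Module.End.independent_iInf_maxGenEigenspace_of_forall_mapsTo (fun q => σ q)
    fun q r c => Module.End.mapsTo_maxGenEigenspace_of_comm (hcomm r q) c).mono fun l => ?_
  exact iInf_mono fun q => Module.End.eigenspace_le_maxGenEigenspace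

/-- If `V` is the sum of its weight spaces, it is their direct sum, so its dimension is the sum of
theirs. -/
theorem exists_wt_not_dvd {p : ℕ} {Q V : Type} [Group Q] [AddCommGroup V] [Module ℂ V]
    [FiniteDimensional ℂ V] {σ : Representation ℂ Q V} (htop : ⨆ l, wt σ l = ⊤)
    (hdim : ¬ p ∣ finrank ℂ V) : ∃ l, ¬ p ∣ finrank ℂ (wt σ l) := by
  classical
  by_contra! hall
  have hind := iSupIndep_wt htop
  have hint := DirectSum.isInternal_ne_bot_iff.2
    (DirectSum.isInternal_submodule_of_iSupIndep_of_iSup_eq_top hind htop)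
  have hfin : {l | wt σ l ≠ ⊥}.Finite := WellFoundedGT.finite_ne_bot_of_iSupIndep hind
  let _ : Fintype {l // wt σ l ≠ ⊥} := hfin.fintype
  refine hdim ?_
  rw [← (LinearEquiv.ofBijective (DirectSum.coeLinearMap fun l : {l // wt σ l ≠ ⊥} => wt σ l) hint).finrank_eq, finrank_directSum]
  exact Finset.dvd_sum fun l _ => hall l

/-! ### Weights of a normal subgroup -/

section Clifford

variable {G V : Type} [Group G] [AddCommGroup V] [Module ℂ V] {K : Subgroup G} [K.Normal]
  {ρ : Representation ℂ G V}

theorem rho_inv_rho (g : G) (v : V) : ρ g⁻¹ (ρ g v) = v := by simp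

theorem mem_wt_conj (g : G) (l : K → ℂ) (v : V) :
    ρ g v ∈ wt (ρ.comp K.subtype) (fun k => l (MulAut.conjNormal g⁻¹ k)) ↔
      v ∈ wt (ρ.comp K.subtype) l := by
  have hcom : ∀ k : K, ρ (k : G) (ρ g v) = ρ g (ρ (MulAut.conjNormal g⁻¹ k : K) v) := by
    intro k
    rw [← Module.End.mul_apply, ← Module.End.mul_apply, ← map_mul, ← map_mul,
      MulAut.conjNormal_apply]
    simp [mul_assoc]
  have hinj : Function.Injective (ρ g) := Function.LeftInverse.injective (rho_inv_rho g)
  simp only [mem_wt, MonoidHom.comp_apply, Subgroup.coe_subtype, hcom, ← map_smul, hinj.eq_iff]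
  exact (MulAut.conjNormal (H := K) g⁻¹).toEquiv.forall_congr_right
    (q := fun k : K => ρ (k : G) v = l k • v)

/-- The group `G` permutes the weight spaces of a normal subgroup as it permutes their weights. -/
theorem map_wt (g : G) (l : K → ℂ) :
    (wt (ρ.comp K.subtype) l).map (ρ g) =
      wt (ρ.comp K.subtype) (fun k => l (MulAut.conjNormal g⁻¹ k)) := by
  ext v
  constructor
  · rintro ⟨w, hw, rfl⟩
    exact (mem_wt_conj g l w).2 hw
  · intro hv
    refine ⟨ρ g⁻¹ v, (mem_wt_conj g l _).1 ?_, by simp⟩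
    simpa using hv

theorem iSup_wt_eq_top (hρ : NoProperInvariant ρ) {v : V} (hv0 : v ≠ 0) {l : K → ℂ}
    (hv : v ∈ wt (ρ.comp K.subtype) l) :
    ⨆ g : G, wt (ρ.comp K.subtype) (fun k => l (MulAut.conjNormal g⁻¹ k)) = ⊤ := by
  refine eq_top_of_mem hρ _ (fun g w hw => ?_) (v := v)
    (Submodule.mem_iSup_of_mem 1 (by simpa using hv)) hv0
  induction hw using Submodule.iSup_induction' with
  | mem h w hw =>
    refine Submodule.mem_iSup_of_mem (g * h) ?_
    have h1 := (mem_wt_conj g _ w).2 hw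
    simpa using h1
  | zero => simp
  | add x y _ _ hx hy => rw [map_add]; exact add_mem hx hy

/-- Clifford's theorem for weights: any two weights of `K` on an irreducible `G`-module are
conjugate, so their weight spaces have the same dimension. -/
theorem finrank_wt_eq (hρ : NoProperInvariant ρ) {l m : K → ℂ}
    (hl : wt (ρ.comp K.subtype) l ≠ ⊥) (hm : wt (ρ.comp K.subtype) m ≠ ⊥) :
    finrank ℂ (wt (ρ.comp K.subtype) l) = finrank ℂ (wt (ρ.comp K.subtype) m) := by
  obtain ⟨v, hv, hv0⟩ := Submodule.exists_mem_ne_zero_of_ne_bot hl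
  have htop := iSup_wt_eq_top hρ hv0 hv
  have hind : iSupIndep (wt (ρ.comp K.subtype)) := by
    refine iSupIndep_wt (eq_top_iff.2 (htop ▸ iSup_le fun g => ?_))
    exact le_iSup (wt (ρ.comp K.subtype)) _
  obtain ⟨g, hg⟩ : ∃ g : G, m = fun k => l (MulAut.conjNormal g⁻¹ k) := by
    by_contra! hne
    refine hm ((hind m).eq_bot_of_le (le_top.trans (htop ▸ iSup_le fun g => ?_)))
    exact le_iSup₂_of_le _ (hne g).symm le_rfl
  have hinj : Function.Injective (ρ g) := Function.LeftInverse.injective (rho_inv_rho g)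
  rw [hg, ← map_wt]
  exact (Submodule.equivMapOfInjective (ρ g) hinj _).finrank_eq

end Clifford

/-! ### Characters from weights and determinants -/

/-- If the characters of `σ`, irreducible, and of `τ`, a sum of weight spaces, are not orthogonal,
then `σ` is one-dimensional and its character is a weight of `τ`. -/
theorem exists_weight {Q U V : Type} [Group Q] [Fintype Q] [AddCommGroup U] [Module ℂ U]
    [FiniteDimensional ℂ U] [AddCommGroup V] [Module ℂ V]
    {σ : Representation ℂ Q U} (hσ : NoProperInvariant σ) {τ : Representation ℂ Q V}
    (htop : ⨆ l, wt τ l = ⊤)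
    (hsum : ∑ q, LinearMap.trace ℂ V (τ q) * (starRingEnd ℂ) (LinearMap.trace ℂ U (σ q)) ≠ 0) :
    finrank ℂ U = 1 ∧ wt τ (fun q => LinearMap.trace ℂ U (σ q)) ≠ ⊥ := by
  set t : Q → ℂ := fun q => LinearMap.trace ℂ U (σ q) with ht
  -- Otherwise `∑ q, conj (t q) • τ q` kills every weight space, hence is `0`, and so is its trace.
  obtain ⟨l, w, hw, hw0, hl⟩ : ∃ l : Q → ℂ, ∃ w ∈ wt τ l, w ≠ 0 ∧
      ∑ q, (starRingEnd ℂ) (t q) * l q ≠ 0 := by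
    by_contra! hall
    have hF : ∑ q, (starRingEnd ℂ) (t q) • τ q = 0 := by
      refine LinearMap.ext fun v => ?_
      have hv : v ∈ ⨆ l, wt τ l := htop ▸ Submodule.mem_top
      induction hv using Submodule.iSup_induction' with
      | mem l v hv =>
        by_cases hv0 : v = 0
        · simp [hv0]
        · have h1 := hall l v hv hv0
          rw [mem_wt] at hv
          simp only [LinearMap.sum_apply, LinearMap.smul_apply, hv, smul_smul,
            ← Finset.sum_smul, h1]
          simp
      | zero => simp
      | add x y _ _ hx hy => rw [map_add, map_add, hx, hy]
    refine hsum ?_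
    have h2 := congrArg (LinearMap.trace ℂ V) hF
    rw [map_sum, map_zero] at h2
    simpa only [map_smul, smul_eq_mul, mul_comm] using h2
  have hmem := mem_wt.1 hw
  have hmul : ∀ q r, l (q * r) = l q * l r := by
    intro q r
    apply smul_left_injective ℂ hw0
    change l (q * r) • w = (l q * l r) • w
    rw [← hmem, map_mul, Module.End.mul_apply, hmem, map_smul, hmem, smul_smul, mul_comm]
  have hnorm : ∀ q, l q * (starRingEnd ℂ) (l q) = 1 := by
    intro q
    have h1 : ‖l q‖ = 1 :=
      Complex.norm_eq_one_of_pow_eq_one (scalar_pow_card hw0 (hmem q)) Nat.card_pos.ne'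
    rw [Complex.mul_conj, Complex.normSq_eq_norm_sq, h1]
    simp
  -- The operator `∑ q, conj (l q) • σ q` has nonzero trace, and it maps into the weight space of `l`.
  obtain ⟨u, hu⟩ : ∃ u : U, ∑ q, (starRingEnd ℂ) (l q) • σ q u ≠ 0 := by
    by_contra! hall
    have hE : ∑ q, (starRingEnd ℂ) (l q) • σ q = 0 :=
      LinearMap.ext fun u => by simpa using hall u
    refine hl ?_
    have h2 := congrArg (fun f => (starRingEnd ℂ) (LinearMap.trace ℂ U f)) hE
    simpa [mul_comm] using h2
  have hwt : wt σ l = ⊤ := by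
    refine eq_top_of_mem hσ _ (fun g x hx => ?_) (mem_wt.2 fun h => ?_) hu
    · rw [mem_wt.1 hx g]
      exact Submodule.smul_mem _ _ hx
    · rw [map_sum, Finset.smul_sum]
      refine Fintype.sum_equiv (Equiv.mulLeft h) _ _ fun q => ?_
      rw [map_smul, ← Module.End.mul_apply, ← map_mul, smul_smul, Equiv.coe_mulLeft, hmul,
        map_mul (starRingEnd ℂ), ← mul_assoc, hnorm, one_mul]
  have hscal : ∀ q, σ q = l q • 1 := fun q =>
    LinearMap.ext fun x => mem_wt.1 (hwt ▸ Submodule.mem_top : x ∈ wt σ l) q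
  have hfin : finrank ℂ U = 1 := by
    refine finrank_eq_one _ hu fun x => Submodule.mem_span_singleton.1 ?_
    rw [eq_top_of_mem hσ (Submodule.span ℂ {_}) (fun g y hy => ?_)
      (Submodule.mem_span_singleton_self _) hu]
    · exact Submodule.mem_top
    · rw [hscal]
      exact Submodule.smul_mem _ _ hy
  refine ⟨hfin, ?_⟩
  have htl : t = l := by
    funext q
    simp [ht, hscal, hfin]
  rw [htl]
  exact fun h => hw0 ((Submodule.mem_bot ℂ).1 (h ▸ hw))

theorem isIrrChar_of_hom {T : Type} [Group T] [Fintype T] (f : T →* ℂ) : IsIrrChar T f := by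
  let θ : Representation ℂ T ℂ := (algebraMap ℂ (End ℂ ℂ)).toMonoidHom.comp f
  have hch : ∀ g, (FDRep.of θ).character g = f g := by
    intro g
    change LinearMap.trace ℂ ℂ (algebraMap ℂ (End ℂ ℂ) (f g)) = f g
    rw [Algebra.algebraMap_eq_smul_one, map_smul, LinearMap.trace_one]
    simp
  refine ⟨FDRep.of θ, ?_, (funext hch).symm⟩
  rw [FDRep.simple_iff_char_is_norm_one]
  simp_rw [hch, ← map_mul, mul_inv_cancel, map_one]
  simp

/-- A power of the determinant of `τ` recovers the scalar `c` by which an element of `T` acts,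
whenever `c` has order dividing `p ^ a`: take the exponent inverse to `dim W` modulo a power
of `p`. -/
theorem exists_hom_extension {p : ℕ} [hp : Fact p.Prime] {T W : Type} [Group T]
    [AddCommGroup W] [Module ℂ W] (τ : Representation ℂ T W)
    (hdim : ¬ p ∣ finrank ℂ W) (a : ℕ) :
    ∃ f : T →* ℂ, ∀ t c, τ t = c • 1 → c ^ p ^ a = 1 → f t = c := by
  -- The exponent `a + 1` keeps the modulus above `1`, also when `a = 0`.
  obtain ⟨n, -, hn⟩ := Nat.exists_mul_mod_eq_one_of_coprime
    (Nat.Coprime.pow_right (a + 1) ((Nat.Prime.coprime_iff_not_dvd hp.out).2 hdim).symm)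
    (Nat.one_lt_pow a.succ_ne_zero hp.out.one_lt)
  refine ⟨(powMonoidHom n).comp (LinearMap.det.comp τ), fun t c ht hc => ?_⟩
  have h1 : c ^ p ^ (a + 1) = 1 := by rw [pow_succ, pow_mul, hc, one_pow]
  change (LinearMap.det (τ t)) ^ n = c
  rw [ht, LinearMap.det_smul, map_one, mul_one, ← pow_mul, pow_eq_pow_mod _ h1, hn, pow_one]

/-! ### The group `O_p(G)` and simple objects of `FDRep` -/

theorem pCore_normal (p : ℕ) (G : Type) [Group G] : (pCore p G).Normal :=
  Subgroup.biSup_normal _ _ fun _ hH => hH.1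

/-- Every normal `p`-subgroup lies in every Sylow `p`-subgroup, hence so does their join. -/
theorem pCore_isPGroup (p : ℕ) [Fact p.Prime] (G : Type) [Group G] [Finite G] :
    IsPGroup p (pCore p G) := by
  obtain ⟨P⟩ : Nonempty (Sylow p G) := inferInstance
  refine P.isPGroup'.to_le (iSup₂_le fun H hH => ?_)
  have := hH.1
  exact hH.2.le_sylow_of_normal P

/-- A simple object of `FDRep` has no proper nonzero invariant subspace: the inclusion of one would
be a nonzero monomorphism, hence an isomorphism. -/
theorem simple_irr {G : Type} [Group G] (V : FDRep ℂ G) [Simple V] : NoProperInvariant V.ρ := by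
  intro W hW
  let R : Representation ℂ G W := Subrepresentation.toRepresentation ⟨W, fun g v hv => hW g v hv⟩
  let i : FDRep.of R ⟶ V := ⟨FGModuleCat.ofHom W.subtype, fun g => by
    ext w; rfl⟩
  have hmono : Mono i := by
    refine ConcreteCategory.mono_of_injective _ ?_
    exact Subtype.val_injective
  by_cases h : i = 0
  · left
    rw [eq_bot_iff]
    intro w hw
    have := congrArg (fun f : FDRep.of R ⟶ V => f.hom.hom ⟨w, hw⟩) h
    exact this
  · right
    have := isIso_of_mono_of_nonzero h
    rw [eq_top_iff]
    intro v _
    have h2 := congrArg (fun f : V ⟶ V => f.hom.hom v) (IsIso.inv_hom_id i)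
    have h3 : i.hom.hom ((inv i).hom.hom v) = v := h2
    rw [← h3]
    exact ((inv i).hom.hom v : W).2

/-! ### Linearity of `κ` and its extension to the inertia group -/

/-- Let `K = O_p(G)`, `κ ∈ Irr(K)` and `χ ∈ Irr(G)` of `p'`-degree lying over `κ`.
Then `κ` is linear and extends to its inertia group `G_κ`. -/
theorem linear_and_extends_of_height_zero_over_pCore
    (p : ℕ) [Fact p.Prime] (G : Type) [Group G] [Fintype G]
    (κ : ↥(pCore p G) → ℂ) (hκ : IsIrrChar ↥(pCore p G) κ)
    (χ : G → ℂ) (hχ : IsIrrChar G χ)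
    (hdeg : ¬ ∃ m : ℕ, χ 1 = ((p * m : ℕ) : ℂ))
    (hover : LiesOver (pCore p G) χ κ) :
    κ 1 = 1 ∧
    ∀ T : Subgroup G,
      -- `T` is the inertia group `G_κ` of `κ` in `G`:
      (∀ g : G, g ∈ T ↔ ∀ (k : G) (hk : k ∈ pCore p G) (hk' : g * k * g⁻¹ ∈ pCore p G),
          κ ⟨g * k * g⁻¹, hk'⟩ = κ ⟨k, hk⟩) →
      -- `κ` extends to an irreducible character of `T`:
      ∃ κext : ↥T → ℂ, IsIrrChar ↥T κext ∧
        ∀ (k : G) (hk : k ∈ pCore p G) (hkT : k ∈ T), κext ⟨k, hkT⟩ = κ ⟨k, hk⟩ := by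
  have hN := pCore_normal p G
  have hP := pCore_isPGroup p G
  obtain ⟨U, hU, rfl⟩ := hκ
  obtain ⟨V, hV, rfl⟩ := hχ
  have hρ := simple_irr V
  have hσ := simple_irr U
  have hdim : ¬ p ∣ finrank ℂ V := fun ⟨m, hm⟩ => hdeg ⟨m, by rw [FDRep.char_one, hm]⟩
  obtain ⟨a, ha⟩ := IsPGroup.iff_card.1 hP
  let τ : Representation ℂ (pCore p G) V := MonoidHom.comp V.ρ (pCore p G).subtype
  have htop : ⨆ l, wt τ l = ⊤ := by
    obtain ⟨v, hv0, hv⟩ := exists_eigenvector hP _ V τ rfl hdim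
    choose l hl using hv
    have h1 := iSup_wt_eq_top hρ hv0 (mem_wt.2 hl : v ∈ wt τ l)
    exact eq_top_iff.2 (h1 ▸ iSup_le fun g => le_iSup (wt τ) _)
  let _ : Fintype (pCore p G) := Fintype.ofFinite (pCore p G)
  unfold LiesOver at hover
  rw [finsum_eq_sum_of_fintype] at hover
  obtain ⟨hU1, hwt⟩ := exists_weight hσ htop hover
  change wt τ U.character ≠ ⊥ at hwt
  refine ⟨by rw [FDRep.char_one, hU1, Nat.cast_one], fun T hT => ?_⟩
  have hdimW : ¬ p ∣ finrank ℂ (wt τ U.character) := by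
    obtain ⟨l, hl⟩ := exists_wt_not_dvd htop hdim
    rwa [finrank_wt_eq hρ (m := l) hwt fun h => hl (by rw [show wt τ l = ⊥ from h]; simp)]
  obtain ⟨w, hw, hw0⟩ := Submodule.exists_mem_ne_zero_of_ne_bot hwt
  let S : Subrepresentation (MonoidHom.comp V.ρ T.subtype : Representation ℂ T V) :=
    ⟨wt τ U.character, fun g v hv => by
      have h1 := (mem_wt_conj (g : G) _ v).2 hv
      have h2 : (fun k : pCore p G => U.character (MulAut.conjNormal (g : G)⁻¹ k)) =
          U.character := by
        funext k
        have h3 := (hT (g : G)⁻¹).1 (T.inv_mem g.2) k k.2 (hN.conj_mem k k.2 _)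
        rw [← h3]
        congr 1
      rwa [h2] at h1⟩
  obtain ⟨f, hf⟩ := exists_hom_extension (p := p) S.toRepresentation hdimW a
  let _ : Fintype T := Fintype.ofFinite T
  refine ⟨f, isIrrChar_of_hom f, fun k hk hkT => hf _ _ ?_ ?_⟩
  · exact LinearMap.ext fun x => Subtype.ext (mem_wt.1 x.2 ⟨k, hk⟩)
  · rw [← ha]
    exact scalar_pow_card hw0 (mem_wt.1 hw ⟨k, hk⟩)
end

section
/- Let $p$ be a prime, $G$ a finite group, $L \trianglelefteq G$ a normal $p'$-subgroup, $Q$ a $p$-subgroup of $G$, and $P$ a $p$-subgroup of $G$ containing $Q$. Then $|C_L(Q) : C_{C_L(Q)}(P)|$ is a factor in the chain: $|L \cap U : C_{L\cap U}(Q)|$ divides $|L : C_L(Q)|$, which divides $|L : C_L(P)|$, for any subgroup $U \leq G$ with $Q = P \cap U$. -/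
/-!
The second divisibility is clear, since `C_L(P) ≤ C_L(Q)`. For the first, `Q` acts coprimely by
conjugation on `L` and on `H = L ∩ U` (it lies in `U`, and `L` is normal), and the claim is
checked one prime `q` at a time.

A `p`-group acting on a set of size prime to `p` has a fixed point. Applied to Sylow
`q`-subgroups and to cosets of their normalizers, this gives for a `Q`-invariant `p'`-group `K`:
every `Q`-invariant `q`-subgroup lies in a `Q`-invariant Sylow `q`-subgroup
(`exists_invariant_sylow_ge`), and any two of the latter are conjugate under `C_K(Q)`
(`exists_conj_eq`). As one of them contains a Sylow `q`-subgroup of `C_K(Q)`, each `Q`-invariant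
Sylow `q`-subgroup `S` of `K` has `C_S(Q)` Sylow in `C_K(Q)`, so the `q`-part of `|K : C_K(Q)|` is
`|S : C_S(Q)|`.

Choosing invariant Sylow `q`-subgroups `S₀ ≤ S` of `H` and `L`, the powers of `q`
`|S₀ : C_{S₀}(Q)| ≤ |S : C_S(Q)|` are therefore the `q`-parts of the two indices.
-/

open scoped Pointwise in
/-- The `p`-group `Q` acts on `X` by conjugation, and `p ∤ |X|` forces a fixed point. -/
theorem exists_mem_centralizer {p : ℕ} [Fact p.Prime] {G : Type*} [Group G] [Finite G]
    {Q : Subgroup G} (hQ : IsPGroup p Q) (X : Set G)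
    (hX : ∀ g ∈ Q, ∀ x ∈ X, g * x * g⁻¹ ∈ X) (hc : ¬ p ∣ Nat.card X) :
    ∃ x ∈ X, x ∈ Subgroup.centralizer (Q : Set G) := by
  let _ : MulAction Q X :=
    { smul g x := ⟨g * x * (g : G)⁻¹, hX g g.2 x x.2⟩
      one_smul x := Subtype.ext (show ((1 : Q) : G) * x * ((1 : Q) : G)⁻¹ = x by simp)
      mul_smul g h x := Subtype.ext
        (show ((g * h : Q) : G) * x * ((g * h : Q) : G)⁻¹ = g * (h * x * (h : G)⁻¹) * (g : G)⁻¹ by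
          simp [mul_assoc]) }
  obtain ⟨x, hx⟩ := hQ.nonempty_fixed_point_of_prime_not_dvd_card X hc
  refine ⟨x, x.2, Subgroup.mem_centralizer_iff.mpr fun g hg => ?_⟩
  have h : g * x * g⁻¹ = (x : G) := congrArg Subtype.val (hx ⟨g, hg⟩)
  exact mul_inv_eq_iff_eq_mul.mp h

theorem relIndex_map_subtype {G : Type*} [Group G] (K : Subgroup G) (P : Subgroup K) :
    (P.map K.subtype).relIndex K = P.index := by
  rw [Subgroup.relIndex, Subgroup.subgroupOf,
    Subgroup.comap_map_eq_self_of_injective K.subtype_injective]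

theorem le_normalizer_of_conj_mem {G : Type*} [Group G] {Q S : Subgroup G}
    (h : ∀ g ∈ Q, ∀ s ∈ S, g * s * g⁻¹ ∈ S) : Q ≤ Subgroup.normalizer (S : Set G) := by
  intro g hg
  rw [Subgroup.mem_normalizer_iff]
  refine fun s => ⟨h g hg s, fun hs => ?_⟩
  simpa [mul_assoc] using h g⁻¹ (inv_mem hg) _ hs

open scoped Pointwise in
/-- A `p`-group normalizing a `p'`-group `K` normalizes some Sylow `q`-subgroup of `K`: the number
of these divides `|K|`, so `Q` fixes one of them. -/
theorem exists_invariant_sylow_s13 {p : ℕ} [Fact p.Prime] {G : Type*} [Group G] [Finite G]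
    {Q K : Subgroup G} (hQ : IsPGroup p Q) (hK : ¬ p ∣ Nat.card K)
    (hQK : Q ≤ Subgroup.normalizer (K : Set G)) (q : ℕ) [Fact q.Prime] :
    ∃ P : Sylow q K,
      Q ≤ Subgroup.normalizer (((P : Subgroup K).map K.subtype : Subgroup G) : Set G) := by
  let _ : MulDistribMulAction Q K := MulDistribMulAction.compHom K (Subgroup.inclusion hQK)
  have hc : ¬ p ∣ Nat.card (Sylow q K) := fun h => hK <|
    h.trans ((Sylow.card_dvd_index (default : Sylow q K)).trans (Subgroup.index_dvd_card _))
  obtain ⟨P, hP⟩ := hQ.nonempty_fixed_point_of_prime_not_dvd_card (Sylow q K) hc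
  refine ⟨P, le_normalizer_of_conj_mem ?_⟩
  rintro g hg _ ⟨s, hs, rfl⟩
  refine ⟨(⟨g, hg⟩ : Q) • s, ?_, rfl⟩
  have h : (⟨g, hg⟩ : Q) • (P : Subgroup K) = P := congrArg Sylow.toSubgroup (hP ⟨g, hg⟩)
  have h2 := Subgroup.smul_mem_pointwise_smul s (⟨g, hg⟩ : Q) (P : Subgroup K) hs
  rwa [h] at h2

/-- A `q`-subgroup of `K` whose index in `K` is divisible by `q` has index divisible by `q` in its
normalizer in `K`. -/
theorem dvd_relIndex_normalizer_inf {G : Type*} [Group G] [Finite G] {q : ℕ} [Fact q.Prime]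
    {S K : Subgroup G} (hSK : S ≤ K) (hS : IsPGroup q S) (h : q ∣ S.relIndex K) :
    q ∣ S.relIndex (Subgroup.normalizer (S : Set G) ⊓ K) := by
  set T := S.subgroupOf K with hT
  have hTS : T.map K.subtype = S := by
    rw [hT, Subgroup.subgroupOf_map_subtype, inf_eq_left.mpr hSK]
  have hTq : IsPGroup q T := hS.comap_of_injective _ K.subtype_injective
  obtain ⟨n, hn⟩ := IsPGroup.iff_card.mp hTq
  have hd : q ^ (n + 1) ∣ Nat.card K := by
    rw [← Subgroup.card_mul_index T, hn, pow_succ]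
    exact mul_dvd_mul_left _ h
  have h1 : q ∣ T.relIndex (Subgroup.normalizer (T : Set K)) :=
    Sylow.prime_dvd_card_quotient_normalizer hd hn
  have h2 : (Subgroup.normalizer (T : Set K)).map K.subtype
      = Subgroup.normalizer (S : Set G) ⊓ K := by
    rw [← Subgroup.subgroupOf_map_subtype, hT, Subgroup.subgroupOf_normalizer_eq hSK]
  rwa [← Subgroup.relIndex_map_map_of_injective _ _ K.subtype_injective, hTS, h2] at h1

/-- Every `Q`-invariant `q`-subgroup of the `p'`-group `K` lies in a `Q`-invariant Sylow
`q`-subgroup of `K`. -/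
theorem exists_invariant_sylow_ge_s13 {p : ℕ} [Fact p.Prime] {G : Type*} [Group G] [Finite G]
    {Q K R : Subgroup G} (hQ : IsPGroup p Q) (hK : ¬ p ∣ Nat.card K)
    (hQK : Q ≤ Subgroup.normalizer (K : Set G)) {q : ℕ} [Fact q.Prime]
    (hRK : R ≤ K) (hR : IsPGroup q R) (hQR : Q ≤ Subgroup.normalizer (R : Set G)) :
    ∃ S : Subgroup G, R ≤ S ∧ S ≤ K ∧ IsPGroup q S ∧ Q ≤ Subgroup.normalizer (S : Set G) ∧
      ¬ q ∣ S.relIndex K := by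
  obtain ⟨S, hRS, hS⟩ := (Set.toFinite {S : Subgroup G | S ≤ K ∧ IsPGroup q S ∧
    Q ≤ Subgroup.normalizer (S : Set G)}).exists_le_maximal ⟨hRK, hR, hQR⟩
  obtain ⟨⟨hSK, hSq, hQS⟩, hmax⟩ := hS
  refine ⟨S, hRS, hSK, hSq, hQS, fun hd => ?_⟩
  have hd' := dvd_relIndex_normalizer_inf hSK hSq hd
  set M := Subgroup.normalizer (S : Set G) ⊓ K with hM
  have hSM : S ≤ M := le_inf Subgroup.le_normalizer hSK
  -- `Q` normalizes `M = N_K(S)`, so it normalizes a Sylow `q`-subgroup of `M`, and the normal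
  -- `q`-subgroup `S` of `M` lies in it.
  have hQM : Q ≤ Subgroup.normalizer (M : Set G) := le_normalizer_of_conj_mem fun g hg s hs =>
    ⟨mul_mem (mul_mem (hQS hg) hs.1) (Subgroup.inv_mem _ (hQS hg)),
      (Subgroup.mem_normalizer_iff.mp (hQK hg) s).mp hs.2⟩
  have hMc : ¬ p ∣ Nat.card M := fun h => hK (h.trans (Subgroup.card_dvd_of_le inf_le_right))
  obtain ⟨P, hP⟩ := exists_invariant_sylow_s13 hQ hMc hQM q
  have hn : (S.subgroupOf M).Normal := ⟨fun s hs m => by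
    rw [Subgroup.mem_subgroupOf] at hs ⊢
    exact (Subgroup.mem_normalizer_iff.mp m.2.1 s).mp hs⟩
  have hSMq : IsPGroup q (S.subgroupOf M) :=
    hSq.comap_of_injective M.subtype M.subtype_injective
  have hSP : S.subgroupOf M ≤ P := hSMq.le_sylow_of_normal P
  have hSP' : S ≤ (P : Subgroup M).map M.subtype := fun s hs => ⟨⟨s, hSM hs⟩, hSP hs, rfl⟩
  have hle := hmax ⟨(Subgroup.map_subtype_le _).trans inf_le_right, P.2.map _, hP⟩ hSP'
  rw [le_antisymm hSP' hle, relIndex_map_subtype] at hd'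
  exact P.not_dvd_index hd'

open scoped Pointwise in
/-- Two `Q`-invariant Sylow `q`-subgroups of the `p'`-group `K` are conjugate under `C_K(Q)`: the
elements of `K` conjugating one to the other form a `Q`-invariant coset of a subgroup of `K`. -/
theorem exists_conj_eq {p : ℕ} [Fact p.Prime] {G : Type*} [Group G] [Finite G]
    {Q K S T : Subgroup G} (hQ : IsPGroup p Q) (hK : ¬ p ∣ Nat.card K)
    (hQK : Q ≤ Subgroup.normalizer (K : Set G)) {q : ℕ} [Fact q.Prime]
    (hSK : S ≤ K) (hS : IsPGroup q S) (hQS : Q ≤ Subgroup.normalizer (S : Set G))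
    (hSi : ¬ q ∣ S.relIndex K)
    (hTK : T ≤ K) (hT : IsPGroup q T) (hQT : Q ≤ Subgroup.normalizer (T : Set G))
    (hTi : ¬ q ∣ T.relIndex K) :
    ∃ c ∈ K, c ∈ Subgroup.centralizer (Q : Set G) ∧ MulAut.conj c • S = T := by
  have hnorm : ∀ (A : Subgroup G) (g : G), g ∈ Subgroup.normalizer (A : Set G) ↔
      MulAut.conj g • A = A := fun A g => by
    rw [← inv_mem_iff, Subgroup.mem_normalizer_iff, SetLike.ext_iff]
    refine forall_congr' fun h => ?_
    rw [Subgroup.mem_pointwise_smul_iff_inv_smul_mem, ← map_inv, MulAut.smul_def,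
      MulAut.conj_apply]
    exact iff_comm
  obtain ⟨x₀, hx₀K, hx₀⟩ : ∃ x ∈ K, MulAut.conj x • S = T := by
    let S' : Sylow q K := IsPGroup.toSylow
      (hS.comap_of_injective K.subtype K.subtype_injective : IsPGroup q (S.subgroupOf K)) hSi
    let T' : Sylow q K := IsPGroup.toSylow
      (hT.comap_of_injective K.subtype K.subtype_injective : IsPGroup q (T.subgroupOf K)) hTi
    obtain ⟨k, hk⟩ := MulAction.exists_smul_eq K S' T'
    refine ⟨k, k.2, ?_⟩
    have h : MulAut.conj k • S.subgroupOf K = T.subgroupOf K := congrArg Sylow.toSubgroup hk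
    rw [Subgroup.conj_smul_subgroupOf hSK, Subgroup.subgroupOf_inj] at h
    rwa [inf_eq_left.mpr hTK, inf_eq_left.mpr (Subgroup.conj_smul_le_of_le hSK k)] at h
  let X : Set G := {x | x ∈ K ∧ MulAut.conj x • S = T}
  have e : X ≃ (Subgroup.normalizer (S : Set G) ⊓ K : Subgroup G) :=
    { toFun x := ⟨x₀⁻¹ * x, (hnorm S _).mpr (by
          rw [map_mul, mul_smul, x.2.2, map_inv, ← hx₀, inv_smul_smul]),
          mul_mem (Subgroup.inv_mem _ hx₀K) x.2.1⟩
      invFun y := ⟨x₀ * y, mul_mem hx₀K y.2.2, by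
          rw [map_mul, mul_smul, (hnorm S _).mp y.2.1, hx₀]⟩
      left_inv x := by simp
      right_inv y := by simp }
  obtain ⟨c, hc, hcQ⟩ := exists_mem_centralizer hQ X (fun g hg x hx =>
    ⟨(Subgroup.mem_normalizer_iff.mp (hQK hg) x).mp hx.1, by
      rw [map_mul, map_mul, mul_smul, mul_smul, (hnorm S _).mp (inv_mem (hQS hg)), hx.2,
        (hnorm T _).mp (hQT hg)]⟩)
    (fun h => hK ((Nat.card_congr e ▸ h).trans (Subgroup.card_dvd_of_le inf_le_right)))
  exact ⟨c, hc.1, hcQ, hc.2⟩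

open scoped Pointwise in
/-- Every `Q`-invariant `q`-subgroup of the `p'`-group `K` lies in a `Q`-invariant Sylow
`q`-subgroup `S` of `K`, and `C_S(Q)` is then a Sylow `q`-subgroup of `C_K(Q)`. -/
theorem exists_invariant_sylow_centralizer {p : ℕ} [Fact p.Prime] {G : Type*} [Group G] [Finite G]
    {Q K R : Subgroup G} (hQ : IsPGroup p Q) (hK : ¬ p ∣ Nat.card K)
    (hQK : Q ≤ Subgroup.normalizer (K : Set G)) {q : ℕ} [Fact q.Prime]
    (hRK : R ≤ K) (hR : IsPGroup q R) (hQR : Q ≤ Subgroup.normalizer (R : Set G)) :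
    ∃ S : Subgroup G, R ≤ S ∧ S ≤ K ∧ IsPGroup q S ∧ Q ≤ Subgroup.normalizer (S : Set G) ∧
      ¬ q ∣ S.relIndex K ∧
      ¬ q ∣ (Subgroup.centralizer (Q : Set G) ⊓ S).relIndex
        (Subgroup.centralizer (Q : Set G) ⊓ K) := by
  set C := Subgroup.centralizer (Q : Set G) with hC
  obtain ⟨S, hRS, hSK, hS, hQS, hSi⟩ := exists_invariant_sylow_ge_s13 hQ hK hQK hRK hR hQR
  refine ⟨S, hRS, hSK, hS, hQS, hSi, ?_⟩
  let D : Sylow q (C ⊓ K : Subgroup G) := default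
  have hDle : (D : Subgroup _).map (C ⊓ K).subtype ≤ C ⊓ K := Subgroup.map_subtype_le _
  have hQD : Q ≤ Subgroup.normalizer (((D : Subgroup _).map (C ⊓ K).subtype : Subgroup G) : Set G) :=
    le_normalizer_of_conj_mem fun g hg s hs => by
      have h := Subgroup.mem_centralizer_iff.mp (hDle hs).1 g hg
      rwa [h, mul_inv_cancel_right]
  obtain ⟨T, hDT, hTK, hT, hQT, hTi⟩ :=
    exists_invariant_sylow_ge_s13 hQ hK hQK (hDle.trans inf_le_right) (D.2.map _) hQD
  have hTC : ¬ q ∣ (C ⊓ T).relIndex (C ⊓ K) := fun h => D.not_dvd_index <| by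
    rw [← relIndex_map_subtype]
    exact h.trans (Subgroup.relIndex_dvd_of_le_left _ (le_inf (hDle.trans inf_le_left) hDT))
  obtain ⟨c, hcK, hcC, hc⟩ := exists_conj_eq hQ hK hQK hSK hS hQS hSi hTK hT hQT hTi
  rwa [← hc, ← Subgroup.conj_smul_eq_self_of_mem (H := C) hcC,
    ← Subgroup.conj_smul_eq_self_of_mem (H := K) hcK, ← Subgroup.smul_inf, ← Subgroup.smul_inf,
    Subgroup.relIndex_pointwise_smul] at hTC

/-- For a `p`-group `Q` normalizing the `p'`-group `K` and a subgroup `H ≤ K`, the index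
`|H : C_H(Q)|` divides `|K : C_K(Q)|`. -/
theorem centralizer_relIndex_dvd {p : ℕ} [Fact p.Prime] {G : Type*} [Group G] [Finite G]
    {Q H K : Subgroup G} (hQ : IsPGroup p Q) (hK : ¬ p ∣ Nat.card K)
    (hQK : Q ≤ Subgroup.normalizer (K : Set G)) (hQH : Q ≤ Subgroup.normalizer (H : Set G))
    (hHK : H ≤ K) :
    (Subgroup.centralizer (Q : Set G)).relIndex H ∣
      (Subgroup.centralizer (Q : Set G)).relIndex K := by
  set C := Subgroup.centralizer (Q : Set G) with hC
  have hH : ¬ p ∣ Nat.card H := fun h => hK (h.trans (Subgroup.card_dvd_of_le hHK))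
  -- `|S : C_S(Q)| |A : S| = |C_A(Q) : C_S(Q)| |A : C_A(Q)|`
  have key : ∀ A S : Subgroup G, S ≤ A →
      C.relIndex S * S.relIndex A = (C ⊓ S).relIndex (C ⊓ A) * C.relIndex A := fun A S h => by
    rw [← Subgroup.inf_relIndex_right C S, ← Subgroup.inf_relIndex_right C A,
      Subgroup.relIndex_mul_relIndex _ _ _ inf_le_right h,
      Subgroup.relIndex_mul_relIndex _ _ _ (inf_le_inf_left C h) inf_le_right]
  refine (Nat.dvd_iff_prime_pow_dvd_dvd _ _).mpr fun q n hq hd => ?_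
  have := Fact.mk hq
  obtain ⟨S₀, -, hS₀H, hS₀, hQS₀, hS₀i, hS₀C⟩ := exists_invariant_sylow_centralizer hQ hH hQH
    (q := q) bot_le IsPGroup.of_bot (le_normalizer_of_conj_mem (by simp))
  obtain ⟨S, hSS, hSK, hS, -, hSi, hSC⟩ := exists_invariant_sylow_centralizer hQ hK hQK
    (hS₀H.trans hHK) hS₀ hQS₀
  have h1 : q ^ n ∣ C.relIndex S₀ := by
    refine Nat.Coprime.dvd_of_dvd_mul_right
      (((Nat.Prime.coprime_iff_not_dvd hq).mpr hS₀i).pow_left n) ?_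
    rw [key H S₀ hS₀H]
    exact hd.mul_left _
  have hpow : ∀ A : Subgroup G, IsPGroup q A → ∃ k, C.relIndex A = q ^ k := fun A hA => by
    obtain ⟨m, hm⟩ := IsPGroup.iff_card.mp hA
    obtain ⟨k, -, hk⟩ := (Nat.dvd_prime_pow hq).mp (hm ▸ Subgroup.relIndex_dvd_card C A)
    exact ⟨k, hk⟩
  -- Both indices are powers of `q`, so the inequality between them is a divisibility.
  have h2 : C.relIndex S₀ ∣ C.relIndex S := by
    have hle : C.relIndex S₀ ≤ C.relIndex S :=
      Subgroup.relIndex_le_of_le_right hSS Subgroup.index_ne_zero_of_finite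
    obtain ⟨a, ha⟩ := hpow S₀ hS₀
    obtain ⟨b, hb⟩ := hpow S hS
    rw [ha, hb] at hle ⊢
    exact pow_dvd_pow q ((Nat.pow_le_pow_iff_right hq.one_lt).mp hle)
  refine Nat.Coprime.dvd_of_dvd_mul_left
    (((Nat.Prime.coprime_iff_not_dvd hq).mpr hSC).pow_left n) ?_
  rw [← key K S hSK]
  exact (h1.trans h2).mul_right _


/-- Navarro's centralizer-index divisibility chain: if `L ⊴ G` is a normal
`p'`-subgroup of the finite group `G`, `Q ≤ P` are `p`-subgroups of `G` and
`U ≤ G` satisfies `Q = P ⊓ U`, then `|L ∩ U : C_{L ∩ U}(Q)|` divides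
`|L : C_L(Q)|`, which in turn divides `|L : C_L(P)|`. -/
theorem centralizer_index_divisibility_chain
    (p : ℕ) [Fact p.Prime] (G : Type*) [Group G] [Finite G]
    (L : Subgroup G) [L.Normal] (hL : ¬ p ∣ Nat.card L)
    (Q P U : Subgroup G) (hQ : IsPGroup p Q) (hP : IsPGroup p P)
    (hQP : Q ≤ P) (hQU : Q = P ⊓ U) :
    ((L ⊓ U ⊓ Subgroup.centralizer (Q : Set G)).subgroupOf (L ⊓ U)).index ∣
        ((L ⊓ Subgroup.centralizer (Q : Set G)).subgroupOf L).index ∧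
    ((L ⊓ Subgroup.centralizer (Q : Set G)).subgroupOf L).index ∣
        ((L ⊓ Subgroup.centralizer (P : Set G)).subgroupOf L).index := by
  have hL' : ∀ A : Subgroup G, A ≤ Subgroup.normalizer (L : Set G) := fun A => by
    rw [Subgroup.normalizer_eq_top]
    exact le_top
  have hQH : Q ≤ Subgroup.normalizer ((L ⊓ U : Subgroup G) : Set G) := by
    have hQ' : Q ≤ U := hQU.le.trans inf_le_right
    exact le_normalizer_of_conj_mem fun g hg s hs =>
      ⟨Subgroup.Normal.conj_mem ‹L.Normal› s hs.1 g,
        mul_mem (mul_mem (hQ' hg) hs.2) (Subgroup.inv_mem _ (hQ' hg))⟩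
  constructor
  · have h := centralizer_relIndex_dvd hQ hL (hL' Q) hQH inf_le_left
    rwa [← Subgroup.inf_relIndex_left, ← Subgroup.inf_relIndex_left (H := L)] at h
  · exact Subgroup.relIndex_dvd_of_le_left L
      (inf_le_inf_left L (Subgroup.centralizer_le hQP))
end
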